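/- Fix θ₀ ∈ Ḣ¹_⋄, f ∈ Ḣ_⋄ and t > 0. There exists a compact linear operator Λ_{θ₀,t} : Ḣ¹_⋄ → Ḣ_⋄ such that sup over θ ∈ Ḣ¹_⋄ with ‖θ − θ₀‖_{L²} < ε of ‖u_θ(t) − u_{θ₀}(t) − Λ_{θ₀,t}[θ − θ₀]‖_{L²} / ‖θ − θ₀‖_{L²} → 0 as ε → 0. Moreover, for ξ ∈ Ḣ¹_⋄ the map t ↦ Λ_{θ₀,t}[ξ] solves the linear PDE dU/dt − νΔU + B[u_{θ₀}, U] + B[U, u_{θ₀}] = 0 with U(0) = ξ, and for any T > 0 and B > 0 there is c = c(ν, ‖f‖_{L²}, T, B) > 0 such that for all θ₀ with ‖θ₀‖_{Ḣ¹} ≤ B and all θ ∈ Ḣ¹_⋄: sup_{0≤t≤T} ‖u_θ(t) − u_{θ₀}(t) − Λ_{θ₀,t}[θ − θ₀]‖_{L²} ≤ c ‖θ − θ₀‖²_{L²}. -/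

import Mathlib

open MeasureTheory Set
open scoped BigOperators

noncomputable section

namespace NS2D

/-- Nonzero Fourier frequencies of the 2D torus `Ω = 𝕋²`. -/
def Freq : Type := {k : ℤ × ℤ // k ≠ 0}

/-- Squared Euclidean modulus `|k|²` of a frequency. -/
def knormSq (k : Freq) : ℝ := (k.1.1 : ℝ) ^ 2 + (k.1.2 : ℝ) ^ 2

/-- Eigenvalue `λ_k = 4π²|k|²` of the periodic Laplacian `−Δ`. -/
def lam (k : Freq) : ℝ := 4 * Real.pi ^ 2 * knormSq k

/-- A divergence-free mean-zero vector field `u ∈ Ḣ_⋄` (or, more generally, an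
element of the scale `Ḣ^α_⋄`) on the torus is represented by its Fourier
coefficients `c k` along the orthonormal basis
`e_k(x) = |k|⁻¹ (k₂, −k₁) exp(2πi k·x)` of divergence-free fields. -/
abbrev Coef : Type := Freq → ℂ

/-- Negation of a frequency. -/
def fneg (k : Freq) : Freq := ⟨-k.1, neg_ne_zero.mpr k.2⟩

/-- The conjugacy condition expressing that the coefficients `c` represent a
real-valued vector field (note `e_{−k} = − conj e_k`). -/
def IsReal (c : Coef) : Prop := ∀ k, c (fneg k) = - (starRingEnd ℂ) (c k)

/-- Squared homogeneous Sobolev norm `‖·‖²_{Ḣ^α} = Σ_k λ_k^α |c k|²`. -/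
def hSq (α : ℝ) (c : Coef) : ℝ := ∑' k, lam k ^ α * ‖c k‖ ^ 2

/-- Homogeneous Sobolev norm `‖·‖_{Ḣ^α}`. -/
def hN (α : ℝ) (c : Coef) : ℝ := Real.sqrt (hSq α c)

/-- Finiteness of the `Ḣ^α`-norm. -/
def FinH (α : ℝ) (c : Coef) : Prop := Summable fun k => lam k ^ α * ‖c k‖ ^ 2

/-- Membership in `Ḣ^α_⋄` (real-valued field with finite `Ḣ^α`-norm). -/
def MemH (α : ℝ) (c : Coef) : Prop := IsReal c ∧ FinH α c

/-- Membership in `Ḣ^∞_⋄ = C^∞(Ω)² ∩ Ḣ_⋄`: all Sobolev norms are finite. -/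
def MemHinf (c : Coef) : Prop := ∀ α : ℝ, MemH α c

/-- Real `Ḣ^α` inner product `⟨·,·⟩_{Ḣ^α}` (for real-valued fields). -/
def hInner (α : ℝ) (c d : Coef) : ℝ := ∑' k, lam k ^ α * (c k * (starRingEnd ℂ) (d k)).re

/-- The `L²` inner product. -/
def innerC (c d : Coef) : ℂ := ∑' k, c k * (starRingEnd ℂ) (d k)

/-- The unit vector `(k₂, −k₁)/|k|` spanning the divergence-free direction at
frequency `k`. -/
def evec (k : Freq) : ℝ × ℝ :=
  ((k.1.2 : ℝ) / Real.sqrt (knormSq k), -((k.1.1 : ℝ)) / Real.sqrt (knormSq k))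

/-- Euclidean dot product on `ℝ²`. -/
def dotR (a b : ℝ × ℝ) : ℝ := a.1 * b.1 + a.2 * b.2

/-- A frequency as a real vector. -/
def fvec (k : Freq) : ℝ × ℝ := ((k.1.1 : ℝ), (k.1.2 : ℝ))

/-- Fourier coefficients (along the basis `e_k`) of the Leray-projected
transport nonlinearity `B[u,v] = P[(u·∇)v]`:
`(B[u,v])^(k) · ē_k = 2πi Σ_{m+n=k, n≠0} c_m d_n (e_m·n)(e_n·e_k)`. -/
def Bc (c d : Coef) : Coef := fun k =>
  (((2 * Real.pi : ℝ) : ℂ) * Complex.I) *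
    ∑' m : Freq,
      if h : k.1 - m.1 ≠ 0 then
        c m * d ⟨k.1 - m.1, h⟩ *
          (((dotR (evec m) (fvec ⟨k.1 - m.1, h⟩) *
            dotR (evec ⟨k.1 - m.1, h⟩) (evec k) : ℝ)) : ℂ)
      else 0

/-- The Laplacian `Δ` acting on the scale: `(Δu)^(k) = −λ_k û(k)`. -/
def lapC (c : Coef) : Coef := fun k => -((lam k : ℝ) : ℂ) * c k

/-- Continuity of a trajectory `t ↦ u(t)`, `t ∈ [0,T]`, for the `Ḣ^α`-norm:
`u ∈ C([0,T], Ḣ^α_⋄)`. -/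
def ContH (α : ℝ) (T : ℝ) (u : ℝ → Coef) : Prop :=
  ∀ t ∈ Icc (0:ℝ) T, ∀ ε > 0, ∃ δ > 0, ∀ s ∈ Icc (0:ℝ) T,
    |s - t| < δ → hN α (u s - u t) < ε

/-- Membership `u ∈ L²([0,T], Ḣ^α_⋄)`. -/
def MemL2H (α : ℝ) (T : ℝ) (u : ℝ → Coef) : Prop :=
  (∀ t ∈ Ioc (0:ℝ) T, MemH α (u t)) ∧
    IntegrableOn (fun t => hSq α (u t)) (Ioc 0 T)

/-- `u` is a strong solution on `[0,T]` of the (Leray-projected) periodic 2D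
Navier–Stokes equations `du/dt + νAu + B[u,u] = f`, `u(0) = θ`, posed in `Ḣ_⋄`:
the Fourier coefficients satisfy the corresponding system of ODEs on `(0,T]`,
the trajectory is continuous into `Ḣ¹_⋄` (in particular at `t = 0`), and lies
in `L²([0,T], Ḣ²_⋄)`. -/
structure IsNSSol (ν : ℝ) (f : Coef) (T : ℝ) (θ : Coef) (u : ℝ → Coef) : Prop where
  init : u 0 = θ
  real : ∀ t ∈ Icc (0:ℝ) T, IsReal (u t)
  deriv : ∀ (k : Freq), ∀ t ∈ Ioc (0:ℝ) T,
    HasDerivAt (fun s => u s k)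
      (f k - ((ν * lam k : ℝ) : ℂ) * u t k - Bc (u t) (u t) k) t
  contH1 : ContH 1 T u
  memL2H2 : MemL2H 2 T u

/-- `U` solves the linear parabolic equation
`dU/dt − νΔU + B[u₀, U] + B[U, u₁] = g`, `U(0) = ξ`, on `[0,T]`. -/
structure IsLinPSol (ν : ℝ) (u₀ u₁ : ℝ → Coef) (g : ℝ → Coef) (T : ℝ) (ξ : Coef)
    (U : ℝ → Coef) : Prop where
  init : U 0 = ξ
  real : ∀ t ∈ Icc (0:ℝ) T, IsReal (U t)
  deriv : ∀ (k : Freq), ∀ t ∈ Ioc (0:ℝ) T,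
    HasDerivAt (fun s => U s k)
      (g t k - ((ν * lam k : ℝ) : ℂ) * U t k - Bc (u₀ t) (U t) k - Bc (U t) (u₁ t) k) t

/-- `U = 𝕀_θ[ξ]` solves the linearisation of Navier–Stokes along the
trajectory `u₀`: `dU/dt − νΔU + B[u₀,U] + B[U,u₀] = 0`, `U(0) = ξ`. -/
def IsLinSol (ν : ℝ) (u₀ : ℝ → Coef) (T : ℝ) (ξ : Coef) (U : ℝ → Coef) : Prop :=
  IsLinPSol ν u₀ u₀ (fun _ => 0) T ξ U

/-- The heat semigroup `S_t = e^{νtΔ}` on the scale `Ḣ^α_⋄`. -/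
def heatS (ν t : ℝ) (c : Coef) : Coef := fun k =>
  ((Real.exp (-(ν * lam k * t)) : ℝ) : ℂ) * c k

/-- Duhamel representation of the solution of the periodic heat equation
`du/dt − νΔu = g`, `u(0) = h`. -/
def heatSol (ν : ℝ) (g : ℝ → Coef) (h : Coef) : ℝ → Coef := fun t k =>
  ((Real.exp (-(ν * lam k * t)) : ℝ) : ℂ) *
    (h k + ∫ s in (0:ℝ)..t, ((Real.exp (ν * lam k * s) : ℝ) : ℂ) * g s k)

/-- Real-linearity of a map on the coefficient space. -/
def IsLinMap (Λ : Coef → Coef) : Prop :=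
  (∀ c d, Λ (c + d) = Λ c + Λ d) ∧ ∀ (r : ℝ) (c : Coef), Λ (r • c) = r • Λ c

/-- `Λ` defines a compact (linear) operator `Ḣ^α_⋄ → Ḣ^β_⋄`: it is linear,
maps `Ḣ^α_⋄` into `Ḣ^β_⋄`, and the image of the `Ḣ^α`-unit ball is totally
bounded for the `Ḣ^β`-norm. -/
def IsCompactOp (α β : ℝ) (Λ : Coef → Coef) : Prop :=
  IsLinMap Λ ∧ (∀ c, MemH α c → MemH β (Λ c)) ∧
    ∀ ε > 0, ∃ S : Finset Coef, ∀ c, MemH α c → hN α c ≤ 1 →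
      ∃ s ∈ S, hN β (Λ c - s) < ε

/-- The index `a* = |a|+1` if `|a| ≤ 1`, `a* = |a|` if `|a| ≥ 2`. -/
def astar (a : ℤ) : ℤ := if |a| ≤ 1 then |a| + 1 else |a|

/-- `i`-th component of the unit vector `evec k`. -/
def evecC (i : Fin 2) (k : Freq) : ℝ := if i = 0 then (evec k).1 else (evec k).2

/-- Fourier coefficients (over all of `ℤ²`) of the scalar component `u_i` of a
divergence-free field with coefficients `c`. -/
def compCoef (i : Fin 2) (c : Coef) : ℤ × ℤ → ℂ := fun n =>
  if h : n ≠ 0 then c ⟨n, h⟩ * ((evecC i ⟨n, h⟩ : ℝ) : ℂ) else 0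

/-- Convolution: Fourier coefficients of a pointwise product of two scalar
functions. -/
def convC (F G : ℤ × ℤ → ℂ) : ℤ × ℤ → ℂ := fun n => ∑' m : ℤ × ℤ, F m * G (n - m)

/-- Squared homogeneous Sobolev norm of a scalar function given by its Fourier
coefficients over `ℤ²`. -/
def hSqScalar (α : ℝ) (F : ℤ × ℤ → ℂ) : ℝ := ∑' k : Freq, lam k ^ α * ‖F k.1‖ ^ 2

/-- `‖u vᵀ‖²_{Ḣ^α} = Σ_{i,j=1}^2 ‖u_i v_j‖²_{Ḣ^α}`. -/
def hSqMat (α : ℝ) (c d : Coef) : ℝ :=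
  ∑ i : Fin 2, ∑ j : Fin 2, hSqScalar α (convC (compCoef i c) (compCoef j d))

/-- The character `exp(2πi k·x)`. -/
def efun (k : Freq) (x : ℝ × ℝ) : ℂ :=
  Complex.exp ((((2 * Real.pi : ℝ)) : ℂ) * Complex.I *
    ((k.1.1 : ℂ) * (x.1 : ℂ) + (k.1.2 : ℂ) * (x.2 : ℂ)))

/-- Pointwise evaluation of the `i`-th component of the field. -/
def evalComp (i : Fin 2) (c : Coef) (x : ℝ × ℝ) : ℂ :=
  ∑' k, c k * ((evecC i k : ℝ) : ℂ) * efun k x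

/-- Supremum norm (`C⁰`-norm) of the field. -/
def c0N (c : Coef) : ℝ := ⨆ x : ℝ × ℝ, max ‖evalComp 0 c x‖ ‖evalComp 1 c x‖

/-- The partial derivative `∂_j` acting on divergence-free fields. -/
def pderiv (j : Fin 2) (c : Coef) : Coef := fun k =>
  (((2 * Real.pi : ℝ) : ℂ) * Complex.I) *
    (if j = 0 then ((k.1.1 : ℤ) : ℂ) else ((k.1.2 : ℤ) : ℂ)) * c k

/-- `C¹`-norm of the field. -/
def c1N (c : Coef) : ℝ := c0N c + c0N (pderiv 0 c) + c0N (pderiv 1 c)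

/-- Norm of the multiplier space `B^ℓ`: `C^ℓ(Ω)²` for `ℓ ≤ 1` and `Ḣ^ℓ` for
`ℓ ≥ 2`. -/
def bN (ℓ : ℕ) (c : Coef) : ℝ :=
  if ℓ = 0 then c0N c else if ℓ = 1 then c1N c else hN (ℓ : ℝ) c

end NS2D

/-!
The energy method with the nonlinearity measured in `Ḣ⁻¹` (Ladyzhenskaya's inequality) shows that
a combination `∑ rᵢ (u_{xᵢ} - u_{θ₀})` of differences of solutions with `∑ rᵢ (xᵢ - θ₀) = 0` is
bounded in `L²` by `(∑ |rᵢ| ‖xᵢ - θ₀‖²)`, up to a constant. Hence the difference quotients of the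
flow at `θ₀` in a given direction are Cauchy, and their limit is linear in the direction with a
quadratic remainder; the linearized equation needs no existence theory, because the limit can be
taken in it mode by mode. Compactness follows from the `L²` Lipschitz bound for the flow and the
compactness of the embedding `Ḣ¹ ⊂ L²`.
-/
namespace NS2D

section

open Filter Topology
open scoped ENNReal ComplexConjugate

instance : Countable Freq := inferInstanceAs (Countable {k : ℤ × ℤ // k ≠ 0})

/-- A lattice point as a complex number; Euclidean inner and cross products of `m` and `n` are the
real and imaginary parts of `m * conj n`. -/
def toComplex : ℤ × ℤ →+ ℂ where
  toFun n := ⟨n.1, n.2⟩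
  map_zero' := by apply Complex.ext <;> simp
  map_add' m n := by apply Complex.ext <;> simp

lemma norm_toComplex (n : ℤ × ℤ) : ‖toComplex n‖ = √((n.1 : ℝ) ^ 2 + (n.2 : ℝ) ^ 2) :=
  Complex.norm_eq_sqrt_sq_add_sq _

lemma norm_sq_toComplex (n : ℤ × ℤ) : ‖toComplex n‖ ^ 2 = (n.1 : ℝ) ^ 2 + (n.2 : ℝ) ^ 2 := by
  rw [norm_toComplex, Real.sq_sqrt (by positivity)]

lemma lam_eq (k : Freq) : lam k = (2 * Real.pi * ‖toComplex k.1‖) ^ 2 := by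
  rw [mul_pow, norm_sq_toComplex, lam, knormSq]
  ring

lemma one_add_norm_sq_le_lam (k : Freq) : 1 + ‖k.1‖ ^ 2 ≤ lam k := by
  have hnorm : 1 ≤ ‖k.1‖ := by
    have h : k.1.1 ≠ 0 ∨ k.1.2 ≠ 0 := by
      by_contra! h
      exact k.2 (Prod.ext h.1 h.2)
    rw [Prod.norm_def, le_max_iff, Int.norm_eq_abs, Int.norm_eq_abs]
    exact_mod_cast h.imp Int.one_le_abs Int.one_le_abs
  have hsup : ‖k.1‖ ^ 2 ≤ knormSq k := by
    rw [Prod.norm_def, knormSq, Int.norm_eq_abs, Int.norm_eq_abs, ← sq_abs (k.1.1 : ℝ),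
      ← sq_abs (k.1.2 : ℝ)]
    rcases max_cases |(k.1.1 : ℝ)| |(k.1.2 : ℝ)| with h | h <;>
      rw [h.1] <;> nlinarith [sq_nonneg |(k.1.1 : ℝ)|, sq_nonneg |(k.1.2 : ℝ)|]
  have hpi : 2 ≤ 4 * Real.pi ^ 2 := by nlinarith [Real.pi_gt_three]
  rw [lam]
  nlinarith

lemma one_le_lam (k : Freq) : 1 ≤ lam k :=
  (le_add_of_nonneg_right (sq_nonneg _)).trans (one_add_norm_sq_le_lam k)

lemma lam_pos (k : Freq) : 0 < lam k := one_pos.trans_le (one_le_lam k)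

lemma finite_setOf_lam_lt (R : ℝ) : {k : Freq | lam k < R}.Finite := by
  refine Finite.of_finite_image (f := Subtype.val) ?_ Subtype.val_injective.injOn
  refine (isCompact_closedBall (0 : ℤ × ℤ) R).finite_of_discrete.subset ?_
  rintro _ ⟨k, hk, rfl⟩
  rw [mem_closedBall_zero_iff]
  nlinarith [one_add_norm_sq_le_lam k, mem_ofPred.mp hk, norm_nonneg k.1]

section Norms

variable {α β : ℝ} {c d : Coef}

lemma hSq_term_nonneg (α : ℝ) (c : Coef) (k : Freq) : 0 ≤ lam k ^ α * ‖c k‖ ^ 2 :=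
  mul_nonneg (Real.rpow_nonneg (lam_pos k).le α) (sq_nonneg _)

lemma hSq_nonneg (α : ℝ) (c : Coef) : 0 ≤ hSq α c := tsum_nonneg (hSq_term_nonneg α c)

lemma hN_nonneg (α : ℝ) (c : Coef) : 0 ≤ hN α c := Real.sqrt_nonneg _

lemma hN_sq (α : ℝ) (c : Coef) : hN α c ^ 2 = hSq α c := Real.sq_sqrt (hSq_nonneg α c)

lemma FinH.hasSum (h : FinH α c) : HasSum (fun k => lam k ^ α * ‖c k‖ ^ 2) (hN α c ^ 2) := by
  rw [hN_sq]
  exact Summable.hasSum h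

lemma FinH.hasSum_zero (h : FinH 0 c) : HasSum (fun k => ‖c k‖ ^ 2) (hN 0 c ^ 2) := by
  simpa only [Real.rpow_zero, one_mul] using h.hasSum

lemma FinH.hasSum_one (h : FinH 1 c) : HasSum (fun k => lam k * ‖c k‖ ^ 2) (hN 1 c ^ 2) := by
  simpa only [Real.rpow_one] using h.hasSum

lemma finH_and_hN_le_of_sum_le {M : ℝ} (hM : 0 ≤ M)
    (h : ∀ S : Finset Freq, ∑ k ∈ S, lam k ^ α * ‖c k‖ ^ 2 ≤ M ^ 2) :
    FinH α c ∧ hN α c ≤ M := by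
  have hc : FinH α c := summable_of_sum_le (hSq_term_nonneg α c) h
  exact ⟨hc, Real.sqrt_le_iff.mpr ⟨hM, hc.tsum_le_of_sum_le h⟩⟩

lemma norm_le_hN_zero (h : FinH 0 c) (k : Freq) : ‖c k‖ ≤ hN 0 c := by
  refine le_of_sq_le_sq ?_ (hN_nonneg 0 c)
  exact le_hasSum h.hasSum_zero k fun _ _ => sq_nonneg _

lemma FinH.mono (h : FinH β c) (hαβ : α ≤ β) : FinH α c :=
  Summable.of_nonneg_of_le (hSq_term_nonneg α c) (fun k => mul_le_mul_of_nonneg_right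
    (Real.rpow_le_rpow_of_exponent_le (one_le_lam k) hαβ) (sq_nonneg _)) h

lemma hN_mono (h : FinH β c) (hαβ : α ≤ β) : hN α c ≤ hN β c :=
  Real.sqrt_le_sqrt <| (h.mono hαβ).tsum_le_tsum (fun k => mul_le_mul_of_nonneg_right
    (Real.rpow_le_rpow_of_exponent_le (one_le_lam k) hαβ) (sq_nonneg _)) h

/-- The operator `A^{α/2}`, an isometry of `Ḣ^α` onto `Ḣ⁰ = ℓ²` that transfers the Hilbert space
structure of `ℓ²` to the scale. -/
def stokesPow (α : ℝ) : Coef →ₗ[ℝ] Coef where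
  toFun c k := ((lam k ^ (α / 2) : ℝ) : ℂ) * c k
  map_add' c d := by ext k; exact mul_add _ _ _
  map_smul' r c := by ext k; exact mul_smul_comm r _ (c k)

lemma norm_stokesPow_sq (α : ℝ) (c : Coef) (k : Freq) :
    ‖stokesPow α c k‖ ^ 2 = lam k ^ α * ‖c k‖ ^ 2 := by
  have hpos := (Real.rpow_pos_of_pos (lam_pos k) (α / 2)).le
  rw [stokesPow, LinearMap.coe_mk, AddHom.coe_mk, norm_mul, mul_pow, Complex.norm_of_nonneg hpos,
    ← Real.rpow_mul_natCast (lam_pos k).le]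
  norm_num

lemma finH_iff_memℓp : FinH α c ↔ Memℓp (stokesPow α c) 2 := by
  simp [memℓp_gen_iff, FinH, norm_stokesPow_sq]

lemma hN_eq_norm (h : Memℓp (stokesPow α c) 2) :
    hN α c = ‖(⟨stokesPow α c, h⟩ : lp (fun _ : Freq => ℂ) 2)‖ := by
  rw [lp.norm_eq_tsum_rpow (by norm_num)]
  simp [hN, hSq, norm_stokesPow_sq, Real.sqrt_eq_rpow]

lemma FinH.add (hc : FinH α c) (hd : FinH α d) : FinH α (c + d) := by
  rw [finH_iff_memℓp] at *
  rw [map_add]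
  exact hc.add hd

lemma hN_add_le (hc : FinH α c) (hd : FinH α d) : hN α (c + d) ≤ hN α c + hN α d := by
  rw [hN_eq_norm (finH_iff_memℓp.mp (hc.add hd)), hN_eq_norm (finH_iff_memℓp.mp hc),
    hN_eq_norm (finH_iff_memℓp.mp hd)]
  refine le_trans (le_of_eq ?_) (norm_add_le _ _)
  congr 1
  exact Subtype.ext (map_add (stokesPow α) c d)

lemma hN_smul (α r : ℝ) (c : Coef) : hN α (r • c) = |r| * hN α c := by
  have hterm (k : Freq) :
      lam k ^ α * ‖(r • c) k‖ ^ 2 = r ^ 2 * (lam k ^ α * ‖c k‖ ^ 2) := by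
    rw [Pi.smul_apply, norm_smul, mul_pow, Real.norm_eq_abs, sq_abs]
    ring
  rw [hN, hSq, tsum_congr hterm, tsum_mul_left, Real.sqrt_mul (sq_nonneg r), Real.sqrt_sq_eq_abs,
    hN, hSq]

lemma FinH.smul (hc : FinH α c) (r : ℝ) : FinH α (r • c) := by
  rw [finH_iff_memℓp] at *
  rw [map_smul]
  exact hc.const_smul r

lemma finH_zero (α : ℝ) : FinH α 0 := by
  simp [FinH]

/-- The coefficient families with finite `Ḣ^α` norm as a real subspace; they need not represent
real-valued fields. -/
def finSobolev (α : ℝ) : Submodule ℝ Coef where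
  carrier := {c | FinH α c}
  add_mem' := FinH.add
  zero_mem' := finH_zero α
  smul_mem' r _ hc := hc.smul r

lemma FinH.neg (hc : FinH α c) : FinH α (-c) := (finSobolev α).neg_mem hc

lemma FinH.sub (hc : FinH α c) (hd : FinH α d) : FinH α (c - d) := (finSobolev α).sub_mem hc hd

lemma hN_zero (α : ℝ) : hN α 0 = 0 := by simp [hN, hSq]

lemma hN_neg (α : ℝ) (c : Coef) : hN α (-c) = hN α c := by
  simpa using hN_smul α (-1) c

lemma hN_sub_le (hc : FinH α c) (hd : FinH α d) : hN α (c - d) ≤ hN α c + hN α d := by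
  rw [sub_eq_add_neg, ← hN_neg α d]
  exact hN_add_le hc hd.neg

lemma hN_sub_rev (α : ℝ) (c d : Coef) : hN α (c - d) = hN α (d - c) := by
  rw [← hN_neg, neg_sub]

lemma abs_hN_sub_hN_le (hc : FinH α c) (hd : FinH α d) : |hN α c - hN α d| ≤ hN α (c - d) := by
  have hcd := hN_add_le (hc.sub hd) hd
  have hdc := hN_add_le (hd.sub hc) hc
  rw [sub_add_cancel] at hcd hdc
  rw [hN_sub_rev] at hdc
  rw [abs_le]
  constructor <;> linarith

end Norms

/-- `Ḣ^α_⋄` as a real subspace of the space of all coefficient families. -/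
def sobolev (α : ℝ) : Submodule ℝ Coef where
  carrier := {c | MemH α c}
  add_mem' {c d} hc hd := by
    refine ⟨fun k => ?_, hc.2.add hd.2⟩
    rw [Pi.add_apply, Pi.add_apply, hc.1 k, hd.1 k, map_add, neg_add]
  zero_mem' := ⟨fun k => by simp, finH_zero α⟩
  smul_mem' r c hc := by
    refine ⟨fun k => ?_, hc.2.smul r⟩
    rw [Pi.smul_apply, Pi.smul_apply, hc.1 k, Complex.real_smul, Complex.real_smul, map_mul,
      Complex.conj_ofReal, mul_neg]

lemma tsum_mul_sq_le {ι : Type*} (f g : ι → ℝ≥0∞) :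
    (∑' i, f i * g i) ^ 2 ≤ (∑' i, f i ^ 2) * ∑' i, g i ^ 2 := by
  let _ : MeasurableSpace ι := ⊤
  have h := ENNReal.lintegral_mul_le_Lp_mul_Lq Measure.count Real.HolderConjugate.two_two
    (Measurable.of_discrete (f := f)).aemeasurable (Measurable.of_discrete (f := g)).aemeasurable
  simp only [lintegral_count, Pi.mul_apply, ENNReal.rpow_two] at h
  calc (∑' i, f i * g i) ^ 2
      ≤ ((∑' i, f i ^ 2) ^ (1 / 2 : ℝ) * (∑' i, g i ^ 2) ^ (1 / 2 : ℝ)) ^ 2 := by gcongr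
    _ = (∑' i, f i ^ 2) * ∑' i, g i ^ 2 := by
      rw [mul_pow, ← ENNReal.rpow_mul_natCast, ← ENNReal.rpow_mul_natCast]
      norm_num

lemma sum_range_inv_sq_le {R : ℝ} (hR : 1 ≤ R) (N : ℕ) :
    ∑ n ∈ Finset.range N, 1 / (R + n) ^ 2 ≤ 1 / (R - 1 / 2) - 1 / (R + N - 1 / 2) := by
  induction N with
  | zero => simp
  | succ N ih =>
    have : (0 : ℝ) ≤ N := N.cast_nonneg
    have hstep : 1 / (R + N) ^ 2 ≤ 1 / (R + N - 1 / 2) - 1 / (R + N + 1 / 2) := by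
      rw [div_sub_div _ _ (by linarith) (by linarith),
        div_le_div_iff₀ (by positivity) (by nlinarith)]
      nlinarith
    have hcast : R + ((N + 1 : ℕ) : ℝ) - 1 / 2 = R + N + 1 / 2 := by push_cast; ring
    rw [Finset.sum_range_succ, hcast]
    linarith

lemma tsum_nat_inv_sq_le {R : ℝ} (hR : 1 ≤ R) :
    ∑' n : ℕ, ENNReal.ofReal (1 / (R + n) ^ 2) ≤ ENNReal.ofReal (2 / R) := by
  refine ENNReal.tsum_le_of_sum_range_le fun N => ?_
  rw [← ENNReal.ofReal_sum_of_nonneg fun n _ => by positivity]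
  refine ENNReal.ofReal_le_ofReal ((sum_range_inv_sq_le hR N).trans ?_)
  have : (0 : ℝ) ≤ N := N.cast_nonneg
  have htail : 0 ≤ 1 / (R + N - 1 / 2) := one_div_nonneg.mpr (by linarith)
  have hhead : 1 / (R - 1 / 2) ≤ 2 / R := by
    rw [div_le_div_iff₀ (by linarith) (by linarith)]
    linarith
  linarith

lemma tsum_int_inv_sq_le {R : ℝ} (hR : 1 ≤ R) :
    ∑' p : ℤ, ENNReal.ofReal (1 / (R + |(p : ℝ)|) ^ 2) ≤ ENNReal.ofReal (4 / R) := by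
  have hneg (n : ℕ) : 1 / (R + |((-(n + 1 : ℤ) : ℤ) : ℝ)|) ^ 2 ≤ 1 / (R + n) ^ 2 := by
    have habs : |((-(n + 1 : ℤ) : ℤ) : ℝ)| = n + 1 := by
      push_cast
      rw [abs_neg, abs_of_nonneg (by positivity)]
    rw [habs]
    gcongr
    linarith
  rw [tsum_of_nat_of_neg_add_one ENNReal.summable ENNReal.summable]
  calc _ ≤ ENNReal.ofReal (2 / R) + ENNReal.ofReal (2 / R) := by
        refine add_le_add (by simpa using tsum_nat_inv_sq_le hR) ?_
        exact (ENNReal.tsum_le_tsum fun n => ENNReal.ofReal_le_ofReal (hneg n)).trans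
          (tsum_nat_inv_sq_le hR)
    _ = ENNReal.ofReal (4 / R) := by
        rw [← ENNReal.ofReal_add (by positivity) (by positivity)]
        ring_nf

/-- Carlson's inequality with a free scale `R`; the optimal choice balances the two sums on the
right. -/
lemma tsum_sq_le_of_one_le {R : ℝ} (hR : 1 ≤ R) (A : ℤ → ℝ≥0∞) :
    (∑' p, A p) ^ 2 ≤ ENNReal.ofReal (4 / R) *
      (2 * (ENNReal.ofReal (R ^ 2) * ∑' p, A p ^ 2 + ∑' p, ‖p‖ₑ ^ 2 * A p ^ 2)) := by
  have hpos (p : ℤ) : 0 < R + |(p : ℝ)| := by positivity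
  have hfactor (p : ℤ) :
      A p = ENNReal.ofReal (1 / (R + |(p : ℝ)|)) * (ENNReal.ofReal (R + |(p : ℝ)|) * A p) := by
    rw [← mul_assoc, ← ENNReal.ofReal_mul (by positivity), one_div_mul_cancel (hpos p).ne',
      ENNReal.ofReal_one, one_mul]
  have hweight (p : ℤ) : (ENNReal.ofReal (R + |(p : ℝ)|) * A p) ^ 2 ≤
      2 * (ENNReal.ofReal (R ^ 2) * A p ^ 2 + ‖p‖ₑ ^ 2 * A p ^ 2) := by
    have henorm : ‖p‖ₑ ^ 2 = ENNReal.ofReal (|(p : ℝ)| ^ 2) := by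
      rw [ENNReal.ofReal_pow (abs_nonneg _), ← Int.norm_eq_abs, ofReal_norm]
    rw [mul_pow, ← ENNReal.ofReal_pow (hpos p).le, henorm, ← add_mul, ← mul_assoc,
      ← ENNReal.ofReal_add (by positivity) (by positivity),
      show (2 : ℝ≥0∞) = ENNReal.ofReal 2 by simp, ← ENNReal.ofReal_mul (by norm_num)]
    gcongr
    nlinarith [sq_nonneg (R - |(p : ℝ)|)]
  calc (∑' p, A p) ^ 2
      = (∑' p : ℤ, ENNReal.ofReal (1 / (R + |(p : ℝ)|)) *
          (ENNReal.ofReal (R + |(p : ℝ)|) * A p)) ^ 2 := by simp_rw [← hfactor]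
    _ ≤ _ := tsum_mul_sq_le _ _
    _ ≤ _ := by
      gcongr
      · simp_rw [← ENNReal.ofReal_pow (one_div_nonneg.mpr (hpos _).le), one_div_pow]
        exact tsum_int_inv_sq_le hR
      · refine (ENNReal.tsum_le_tsum hweight).trans_eq ?_
        rw [ENNReal.tsum_mul_left, ENNReal.tsum_add, ENNReal.tsum_mul_left]

/-- The discrete form of `‖g‖_∞² ≤ C ‖g‖_{L²} ‖g‖_{H¹}` in one dimension. -/
theorem carlson_inequality (A : ℤ → ℝ≥0∞) :
    (∑' p, A p) ^ 4 ≤ 256 * (∑' p, A p ^ 2) * ∑' p, (1 + ‖p‖ₑ ^ 2) * A p ^ 2 := by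
  set S₀ := ∑' p, A p ^ 2 with hS₀
  set S₁ := ∑' p, (1 + ‖p‖ₑ ^ 2) * A p ^ 2 with hS₁
  have hsplit : S₁ = S₀ + ∑' p, ‖p‖ₑ ^ 2 * A p ^ 2 := by
    simp_rw [hS₁, add_mul, one_mul, ENNReal.tsum_add, hS₀]
  have hle : S₀ ≤ S₁ := hsplit ▸ le_self_add
  rcases eq_or_ne S₀ 0 with hzero | hzero
  · have hA : ∀ p, A p = 0 := by simpa [hS₀] using hzero
    simp [hA]
  rcases eq_or_ne S₁ ⊤ with htop | htop
  · simp [htop, hzero]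
  have htop₀ : S₀ ≠ ⊤ := ne_top_of_le_ne_top htop hle
  have h₀ : 0 < S₀.toReal := ENNReal.toReal_pos hzero htop₀
  have h₀₁ : S₀.toReal ≤ S₁.toReal := ENNReal.toReal_mono htop hle
  set R := √(S₁.toReal / S₀.toReal) with hRdef
  have hR : 1 ≤ R := Real.one_le_sqrt.mpr ((one_le_div h₀).mpr h₀₁)
  have hR2 : R ^ 2 * S₀.toReal = S₁.toReal := by
    rw [hRdef, Real.sq_sqrt (div_nonneg (h₀.le.trans h₀₁) h₀.le), div_mul_cancel₀ _ h₀.ne']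
  have hbalance : ENNReal.ofReal (R ^ 2) * S₀ = S₁ := by
    rw [← ENNReal.ofReal_toReal htop₀, ← ENNReal.ofReal_mul (by positivity), hR2,
      ENNReal.ofReal_toReal htop]
  have htail : ∑' p, ‖p‖ₑ ^ 2 * A p ^ 2 ≤ S₁ := hsplit ▸ le_add_self
  have hsq : (∑' p, A p) ^ 2 ≤ ENNReal.ofReal (4 / R) * (2 * (S₁ + S₁)) := by
    refine (tsum_sq_le_of_one_le hR A).trans ?_
    rw [← hS₀, hbalance]
    gcongr
  have hconst : ENNReal.ofReal (4 / R) ^ 2 * S₁ = 16 * S₀ := by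
    rw [← hbalance, ← mul_assoc, ← ENNReal.ofReal_pow (by positivity),
      ← ENNReal.ofReal_mul (by positivity), div_pow, div_mul_cancel₀ _ (by positivity)]
    norm_num
  calc (∑' p, A p) ^ 4 = ((∑' p, A p) ^ 2) ^ 2 := by rw [← pow_mul]
    _ ≤ (ENNReal.ofReal (4 / R) * (2 * (S₁ + S₁))) ^ 2 := by gcongr
    _ = 16 * (ENNReal.ofReal (4 / R) ^ 2 * S₁) * S₁ := by ring
    _ = 256 * S₀ * S₁ := by rw [hconst]; ring

lemma tsum_sqrt_tsum_sq_pow_four_le (a : ℤ → ℤ → ℝ≥0∞) :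
    (∑' p, (∑' m, a p m ^ 2) ^ (1 / 2 : ℝ)) ^ 4 ≤
      256 * (∑' p, ∑' m, a p m ^ 2) * ∑' p, ∑' m, (1 + ‖p‖ₑ ^ 2) * a p m ^ 2 := by
  simpa [← ENNReal.rpow_mul_natCast, ENNReal.tsum_mul_left] using
    carlson_inequality fun p => (∑' m, a p m ^ 2) ^ (1 / 2 : ℝ)

lemma tsum_rows_pow_four_le (a : ℤ × ℤ → ℝ≥0∞) :
    (∑' p, (∑' m, a (p, m) ^ 2) ^ (1 / 2 : ℝ)) ^ 4 ≤
      256 * (∑' x, a x ^ 2) * ∑' x, (1 + ‖x‖ₑ ^ 2) * a x ^ 2 := by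
  refine (tsum_sqrt_tsum_sq_pow_four_le fun p m => a (p, m)).trans ?_
  rw [ENNReal.tsum_prod' (f := fun x => a x ^ 2),
    ENNReal.tsum_prod' (f := fun x => (1 + ‖x‖ₑ ^ 2) * a x ^ 2)]
  gcongr with p m
  exact enorm_le_iff_norm_le.mpr (norm_fst_le (p, m))

lemma tsum_columns_pow_four_le (a : ℤ × ℤ → ℝ≥0∞) :
    (∑' p, (∑' m, a (m, p) ^ 2) ^ (1 / 2 : ℝ)) ^ 4 ≤
      256 * (∑' x, a x ^ 2) * ∑' x, (1 + ‖x‖ₑ ^ 2) * a x ^ 2 := by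
  have hswap (x : ℤ × ℤ) : ‖x.swap‖ₑ = ‖x‖ₑ :=
    enorm_eq_iff_norm_eq.mpr (max_comm ‖x.2‖ ‖x.1‖)
  have h := tsum_rows_pow_four_le (a ∘ Prod.swap)
  rw [← (Equiv.prodComm ℤ ℤ).tsum_eq fun x => a x ^ 2,
    ← (Equiv.prodComm ℤ ℤ).tsum_eq fun x => (1 + ‖x‖ₑ ^ 2) * a x ^ 2]
  simpa [hswap] using h

lemma tsum_mul_mul_shift_le (a b : ℤ → ℝ≥0∞) (c : ℤ × ℤ → ℝ≥0∞) (p q : ℤ) :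
    ∑' x : ℤ × ℤ, a x.1 * b x.2 * c (x.1 + q, p + x.2) ≤
      (∑' m, a m ^ 2) ^ (1 / 2 : ℝ) * (∑' n, b n ^ 2) ^ (1 / 2 : ℝ) *
        (∑' x, c x ^ 2) ^ (1 / 2 : ℝ) := by
  have hc : ∑' x : ℤ × ℤ, c (x.1 + q, p + x.2) ^ 2 = ∑' x, c x ^ 2 :=
    ((Equiv.addRight q).prodCongr (Equiv.addLeft p)).tsum_eq fun x => c x ^ 2
  have hab : ∑' x : ℤ × ℤ, (a x.1 * b x.2) ^ 2 = (∑' m, a m ^ 2) * ∑' n, b n ^ 2 := by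
    simp_rw [mul_pow, ENNReal.tsum_prod', ENNReal.tsum_mul_left, ENNReal.tsum_mul_right]
  have hcs := tsum_mul_sq_le (fun x : ℤ × ℤ => a x.1 * b x.2) fun x => c (x.1 + q, p + x.2)
  rw [hc, hab] at hcs
  rw [← ENNReal.mul_rpow_of_nonneg _ _ (by norm_num),
    ← ENNReal.mul_rpow_of_nonneg _ _ (by norm_num), one_div,
    ENNReal.le_rpow_inv_iff (by norm_num), ENNReal.rpow_two]
  exact hcs

lemma tsum_mul_mul_add_le (a b c : ℤ × ℤ → ℝ≥0∞) :
    ∑' x : (ℤ × ℤ) × (ℤ × ℤ), a x.1 * b x.2 * c (x.1 + x.2) ≤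
      (∑' p, (∑' m, a (m, p) ^ 2) ^ (1 / 2 : ℝ)) * (∑' q, (∑' n, b (q, n) ^ 2) ^ (1 / 2 : ℝ)) *
        (∑' x, c x ^ 2) ^ (1 / 2 : ℝ) := by
  calc _ = ∑' (p : ℤ) (q : ℤ) (x : ℤ × ℤ),
        a (x.1, p) * b (q, x.2) * c (x.1 + q, p + x.2) := by
        simp_rw [ENNReal.tsum_prod', Prod.mk_add_mk]
        rw [ENNReal.tsum_comm]
        exact tsum_congr fun p => ENNReal.tsum_comm
    _ ≤ ∑' (p : ℤ) (q : ℤ), (∑' m, a (m, p) ^ 2) ^ (1 / 2 : ℝ) *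
          (∑' n, b (q, n) ^ 2) ^ (1 / 2 : ℝ) * (∑' x, c x ^ 2) ^ (1 / 2 : ℝ) :=
        ENNReal.tsum_le_tsum fun p => ENNReal.tsum_le_tsum fun q =>
          tsum_mul_mul_shift_le (fun m => a (m, p)) (fun n => b (q, n)) c p q
    _ = _ := by simp_rw [ENNReal.tsum_mul_right, ENNReal.tsum_mul_left, ENNReal.tsum_mul_right]

/-- A discrete form of Ladyzhenskaya's inequality `‖g‖_{L⁴}² ≤ C ‖g‖_{L²} ‖g‖_{H¹}` in two
dimensions: with the second coordinate of `x` and the first coordinate of `y` fixed, `x + y`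
determines `x` and `y`, which decouples the double sum into one-dimensional ones. -/
theorem tsum_mul_mul_add_pow_four_le (a b c : ℤ × ℤ → ℝ≥0∞) :
    (∑' x : (ℤ × ℤ) × (ℤ × ℤ), a x.1 * b x.2 * c (x.1 + x.2)) ^ 4 ≤
      256 ^ 2 * ((∑' x, a x ^ 2) * ∑' x, (1 + ‖x‖ₑ ^ 2) * a x ^ 2) *
        ((∑' x, b x ^ 2) * ∑' x, (1 + ‖x‖ₑ ^ 2) * b x ^ 2) * (∑' x, c x ^ 2) ^ 2 := by
  have hc : ((∑' x, c x ^ 2) ^ (1 / 2 : ℝ)) ^ 4 = (∑' x, c x ^ 2) ^ 2 := by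
    rw [← ENNReal.rpow_mul_natCast, ← ENNReal.rpow_two]
    norm_num
  calc _ ≤ ((∑' p, (∑' m, a (m, p) ^ 2) ^ (1 / 2 : ℝ)) *
        (∑' q, (∑' n, b (q, n) ^ 2) ^ (1 / 2 : ℝ)) * (∑' x, c x ^ 2) ^ (1 / 2 : ℝ)) ^ 4 := by
        gcongr
        exact tsum_mul_mul_add_le a b c
    _ ≤ (256 * (∑' x, a x ^ 2) * ∑' x, (1 + ‖x‖ₑ ^ 2) * a x ^ 2) *
          (256 * (∑' x, b x ^ 2) * ∑' x, (1 + ‖x‖ₑ ^ 2) * b x ^ 2) * (∑' x, c x ^ 2) ^ 2 := by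
        rw [mul_pow, mul_pow, hc]
        gcongr
        · exact tsum_columns_pow_four_le a
        · exact tsum_rows_pow_four_le b
    _ = _ := by ring

/-- Extension by zero of a coefficient family to the frequency `0`, so that convolutions become
sums over the group `ℤ × ℤ`. -/
def zeroExt (c : Coef) (n : ℤ × ℤ) : ℂ := if h : n ≠ 0 then c ⟨n, h⟩ else 0

section ZeroExt

variable {c d : Coef}

lemma zeroExt_of_ne (c : Coef) {n : ℤ × ℤ} (h : n ≠ 0) : zeroExt c n = c ⟨n, h⟩ := dif_pos h

@[simp] lemma zeroExt_zero_right (c : Coef) : zeroExt c 0 = 0 := by simp [zeroExt]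

@[simp] lemma zeroExt_coe (c : Coef) (k : Freq) : zeroExt c k.1 = c k := zeroExt_of_ne c k.2

lemma zeroExt_add (c d : Coef) (n : ℤ × ℤ) : zeroExt (c + d) n = zeroExt c n + zeroExt d n := by
  by_cases h : n = 0
  · simp [h]
  · rw [zeroExt_of_ne _ h, zeroExt_of_ne _ h, zeroExt_of_ne _ h]
    rfl

lemma zeroExt_smul (r : ℝ) (c : Coef) (n : ℤ × ℤ) : zeroExt (r • c) n = r * zeroExt c n := by
  by_cases h : n = 0
  · simp [h]
  · rw [zeroExt_of_ne _ h, zeroExt_of_ne _ h]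
    exact Complex.real_smul

lemma IsReal.zeroExt_neg (hc : IsReal c) (n : ℤ × ℤ) : zeroExt c (-n) = -conj (zeroExt c n) := by
  by_cases h : n = 0
  · simp [h]
  · simpa [zeroExt, h, fneg] using hc ⟨n, h⟩

lemma eq_zero_of_notMem_range_freq {E : Type*} [Zero E] {F : ℤ × ℤ → E} (hF : F 0 = 0) :
    ∀ n ∉ range (Subtype.val : Freq → ℤ × ℤ), F n = 0 := by
  rintro n hn
  by_cases h : n = 0
  · rw [h, hF]
  · exact (hn ⟨⟨n, h⟩, rfl⟩).elim

lemma hasSum_freq_iff {E : Type*} [AddCommMonoid E] [TopologicalSpace E] {F : ℤ × ℤ → E} {S : E}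
    (hF : F 0 = 0) : HasSum (fun k : Freq => F k.1) S ↔ HasSum F S :=
  Subtype.val_injective.hasSum_iff (eq_zero_of_notMem_range_freq hF)

lemma tsum_freq_eq {E : Type*} [AddCommMonoid E] [TopologicalSpace E] {F : ℤ × ℤ → E}
    (hF : F 0 = 0) : ∑' k : Freq, F k.1 = ∑' n, F n :=
  Subtype.val_injective.tsum_eq <| Function.support_subset_iff'.mpr <|
    eq_zero_of_notMem_range_freq hF

lemma FinH.hasSum_zeroExt (hc : FinH 0 c) :
    HasSum (fun n => ‖zeroExt c n‖ ^ 2) (hN 0 c ^ 2) := by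
  rw [← hasSum_freq_iff (by simp)]
  simpa only [zeroExt_coe] using hc.hasSum_zero

/-- The symbol `(e_m · n)(e_n · e_k)` of the transport term, zero if a frequency vanishes. -/
def transportKernel (m n k : ℤ × ℤ) : ℝ :=
  (toComplex m * conj (toComplex n)).im / ‖toComplex m‖ *
    ((toComplex n * conj (toComplex k)).re / (‖toComplex n‖ * ‖toComplex k‖))

lemma abs_transportKernel_le_cross (m n k : ℤ × ℤ) :
    |transportKernel m n k| ≤ |(toComplex m * conj (toComplex n)).im| / ‖toComplex m‖ := by
  have hcos : |(toComplex n * conj (toComplex k)).re| / (‖toComplex n‖ * ‖toComplex k‖) ≤ 1 := by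
    refine div_le_one_of_le₀ ((Complex.abs_re_le_norm _).trans ?_) (by positivity)
    rw [norm_mul, RCLike.norm_conj]
  rw [transportKernel, abs_mul, abs_div, abs_div, abs_norm, abs_of_nonneg (by positivity :
    0 ≤ ‖toComplex n‖ * ‖toComplex k‖)]
  exact mul_le_of_le_one_right (by positivity) hcos

lemma abs_im_mul_conj_div_norm_le (z w : ℂ) : |(z * conj w).im| / ‖z‖ ≤ ‖w‖ := by
  refine div_le_of_le_mul₀ (norm_nonneg z) (norm_nonneg w) ((Complex.abs_im_le_norm _).trans ?_)
  rw [norm_mul, RCLike.norm_conj, mul_comm]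

lemma abs_transportKernel_le_norm_snd (m n k : ℤ × ℤ) :
    |transportKernel m n k| ≤ ‖toComplex n‖ :=
  (abs_transportKernel_le_cross m n k).trans (abs_im_mul_conj_div_norm_le _ _)

/-- `e_m · (k - m) = e_m · k`: the derivative can be moved onto the test function. -/
lemma abs_transportKernel_sub_le (m k : ℤ × ℤ) :
    |transportKernel m (k - m) k| ≤ ‖toComplex k‖ := by
  refine (abs_transportKernel_le_cross m (k - m) k).trans ?_
  have hcross : (toComplex m * conj (toComplex (k - m))).im
      = (toComplex m * conj (toComplex k)).im := by
    rw [map_sub, map_sub, mul_sub, Complex.sub_im, Complex.mul_conj, Complex.ofReal_im, sub_zero]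
  rw [hcross]
  exact abs_im_mul_conj_div_norm_le _ _

lemma transportKernel_swap (p k : ℤ × ℤ) :
    transportKernel p k (k + p) = -transportKernel (-p) (k + p) k := by
  simp only [transportKernel, map_neg, map_add, norm_neg, Complex.mul_im, Complex.mul_re,
    Complex.add_re, Complex.add_im, Complex.neg_re, Complex.neg_im, Complex.conj_re,
    Complex.conj_im]
  ring

lemma Bc_eq (c d : Coef) (k : Freq) :
    Bc c d k = ((2 * Real.pi : ℝ) : ℂ) * Complex.I *
      ∑' m : ℤ × ℤ, zeroExt c m * zeroExt d (k.1 - m) * transportKernel m (k.1 - m) k.1 := by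
  rw [← tsum_freq_eq (by simp), Bc]
  congr 1
  refine tsum_congr fun m => ?_
  split_ifs with h
  · rw [zeroExt_coe, show zeroExt d (k.1 - m.1) = d ⟨k.1 - m.1, h⟩ from dif_pos h]
    congr 2
    simp only [transportKernel, dotR, evec, fvec, norm_toComplex, knormSq]
    simp [toComplex]
    ring
  · rw [not_not.mp h]
    simp

lemma summable_mul_and_tsum_mul_le {ι : Type*} {f g : ι → ℝ} {A B : ℝ} (hA : 0 ≤ A) (hB : 0 ≤ B)
    (hf : ∀ i, 0 ≤ f i) (hg : ∀ i, 0 ≤ g i) (hfA : HasSum (fun i => f i ^ 2) (A ^ 2))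
    (hgB : HasSum (fun i => g i ^ 2) (B ^ 2)) :
    Summable (fun i => f i * g i) ∧ ∑' i, f i * g i ≤ A * B := by
  obtain ⟨S, -, hS, hsum⟩ := Real.inner_le_Lp_mul_Lq_hasSum_of_nonneg Real.HolderConjugate.two_two
    hA hB hf hg (by simpa using hfA) (by simpa using hgB)
  exact ⟨hsum.summable, hsum.tsum_eq.trans_le hS⟩

lemma summable_norm_mul_norm_sub_and_tsum_le (hc : FinH 0 c) (hd : FinH 0 d) (n : ℤ × ℤ) :
    Summable (fun m => ‖zeroExt c m‖ * ‖zeroExt d (n - m)‖) ∧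
      ∑' m, ‖zeroExt c m‖ * ‖zeroExt d (n - m)‖ ≤ hN 0 c * hN 0 d :=
  summable_mul_and_tsum_mul_le (hN_nonneg 0 c) (hN_nonneg 0 d) (fun _ => norm_nonneg _)
    (fun _ => norm_nonneg _) hc.hasSum_zeroExt
    ((Equiv.subLeft n).hasSum_iff.mpr hd.hasSum_zeroExt)

lemma norm_transport_le (c d : Coef) (n m : ℤ × ℤ) :
    ‖zeroExt c m * zeroExt d (n - m) * transportKernel m (n - m) n‖
      ≤ ‖toComplex n‖ * (‖zeroExt c m‖ * ‖zeroExt d (n - m)‖) := by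
  rw [norm_mul, norm_mul, Complex.norm_real, Real.norm_eq_abs, mul_comm]
  gcongr
  exact abs_transportKernel_sub_le m n

lemma summable_transport (hc : FinH 0 c) (hd : FinH 0 d) (n : ℤ × ℤ) :
    Summable fun m => zeroExt c m * zeroExt d (n - m) * transportKernel m (n - m) n :=
  Summable.of_norm_bounded ((summable_norm_mul_norm_sub_and_tsum_le hc hd n).1.mul_left _)
    (norm_transport_le c d n)

lemma norm_Bc_le (hc : FinH 0 c) (hd : FinH 0 d) (k : Freq) :
    ‖Bc c d k‖ ≤ 2 * Real.pi * ‖toComplex k.1‖ * (hN 0 c * hN 0 d) := by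
  obtain ⟨hsum, hle⟩ := summable_norm_mul_norm_sub_and_tsum_le hc hd k.1
  rw [Bc_eq, norm_mul, norm_mul, Complex.norm_I, mul_one,
    Complex.norm_of_nonneg Real.two_pi_pos.le, mul_assoc (2 * Real.pi)]
  refine mul_le_mul_of_nonneg_left ?_ Real.two_pi_pos.le
  refine (tsum_of_norm_bounded (hsum.mul_left _).hasSum (norm_transport_le c d k.1)).trans ?_
  rw [tsum_mul_left]
  exact mul_le_mul_of_nonneg_left hle (norm_nonneg _)

/-- The transport term as a bilinear map; it is defined on all of `L²` because the derivative can
be moved onto the frequency at which the result is evaluated. -/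
def transport : finSobolev 0 →ₗ[ℝ] finSobolev 0 →ₗ[ℝ] Coef :=
  LinearMap.mk₂ ℝ (fun c d => Bc c d)
    (fun c c' d => by
      ext k
      simp only [Bc_eq, Submodule.coe_add, zeroExt_add, add_mul, Pi.add_apply]
      rw [(summable_transport c.2 d.2 _).tsum_add (summable_transport c'.2 d.2 _), mul_add])
    (fun r c d => by
      ext k
      simp only [Bc_eq, Submodule.coe_smul, zeroExt_smul, mul_assoc, Pi.smul_apply, tsum_mul_left,
        Complex.real_smul]
      ring)
    (fun c d d' => by
      ext k
      simp only [Bc_eq, Submodule.coe_add, zeroExt_add, mul_add, add_mul, Pi.add_apply]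
      rw [(summable_transport c.2 d.2 _).tsum_add (summable_transport c.2 d'.2 _), mul_add])
    (fun r c d => by
      ext k
      simp only [Bc_eq, Submodule.coe_smul, zeroExt_smul, mul_left_comm _ (r : ℂ), mul_assoc,
        Pi.smul_apply, tsum_mul_left, Complex.real_smul])

lemma transport_apply (c d : finSobolev 0) : transport c d = Bc c d := rfl

lemma Bc_sub_left {c' : Coef} (hc : FinH 0 c) (hc' : FinH 0 c') (hd : FinH 0 d) :
    Bc (c - c') d = Bc c d - Bc c' d := by
  simpa only [transport_apply, Submodule.coe_sub] using
    LinearMap.map_sub₂ transport ⟨c, hc⟩ ⟨c', hc'⟩ ⟨d, hd⟩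

lemma Bc_sub_right {d' : Coef} (hc : FinH 0 c) (hd : FinH 0 d) (hd' : FinH 0 d') :
    Bc c (d - d') = Bc c d - Bc c d' := by
  simpa only [transport_apply, Submodule.coe_sub] using
    map_sub (transport ⟨c, hc⟩) ⟨d, hd⟩ ⟨d', hd'⟩

lemma Bc_sum_smul_left {ι : Type*} (s : Finset ι) (r : ι → ℝ) {w : ι → Coef}
    (hw : ∀ i, FinH 0 (w i)) (hd : FinH 0 d) :
    Bc (∑ i ∈ s, r i • w i) d = ∑ i ∈ s, r i • Bc (w i) d := by
  have h : transport (∑ i ∈ s, r i • ⟨w i, hw i⟩) ⟨d, hd⟩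
      = ∑ i ∈ s, r i • transport ⟨w i, hw i⟩ ⟨d, hd⟩ := by
    simp only [map_sum, map_smul, LinearMap.sum_apply, LinearMap.smul_apply]
  simpa only [transport_apply, Submodule.coe_sum, Submodule.coe_smul] using h

lemma Bc_sum_smul_right {ι : Type*} (s : Finset ι) (r : ι → ℝ) {w : ι → Coef}
    (hc : FinH 0 c) (hw : ∀ i, FinH 0 (w i)) :
    Bc c (∑ i ∈ s, r i • w i) = ∑ i ∈ s, r i • Bc c (w i) := by
  have h : transport ⟨c, hc⟩ (∑ i ∈ s, r i • ⟨w i, hw i⟩)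
      = ∑ i ∈ s, r i • transport ⟨c, hc⟩ ⟨w i, hw i⟩ := by
    simp only [map_sum, map_smul]
  simpa only [transport_apply, Submodule.coe_sum, Submodule.coe_smul] using h

lemma norm_Bc_sub_Bc_le {c' d' : Coef} (hc : FinH 0 c) (hc' : FinH 0 c') (hd : FinH 0 d)
    (hd' : FinH 0 d') (k : Freq) :
    ‖Bc c d k - Bc c' d' k‖ ≤ 2 * Real.pi * ‖toComplex k.1‖ *
      (hN 0 (c - c') * hN 0 d + hN 0 c' * hN 0 (d - d')) := by
  have hsplit : Bc c d k - Bc c' d' k = Bc (c - c') d k + Bc c' (d - d') k := by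
    rw [Bc_sub_left hc hc' hd, Bc_sub_right hc' hd hd']
    simp only [Pi.sub_apply]
    ring
  rw [hsplit, mul_add]
  exact (norm_add_le _ _).trans (add_le_add (norm_Bc_le (hc.sub hc') hd k)
    (norm_Bc_le hc' (hd.sub hd') k))

end ZeroExt

section Pairing

variable {α : ℝ} {R R' w w' : Coef}

lemma hInner_zero_eq (c d : Coef) : hInner 0 c d = ∑' k, (c k * conj (d k)).re := by
  simp only [hInner, Real.rpow_zero, one_mul]

lemma norm_stokesPow_neg_mul_norm_stokesPow (α : ℝ) (R w : Coef) (k : Freq) :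
    ‖stokesPow (-α) R k‖ * ‖stokesPow α w k‖ = ‖R k‖ * ‖w k‖ := by
  refine (sq_eq_sq₀ (by positivity) (by positivity)).mp ?_
  rw [mul_pow, norm_stokesPow_sq, norm_stokesPow_sq, mul_mul_mul_comm,
    ← Real.rpow_add (lam_pos k), neg_add_cancel, Real.rpow_zero, one_mul, mul_pow]

lemma summable_norm_mul_norm_and_tsum_le (hR : FinH (-α) R) (hw : FinH α w) :
    Summable (fun k => ‖R k‖ * ‖w k‖) ∧ ∑' k, ‖R k‖ * ‖w k‖ ≤ hN (-α) R * hN α w := by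
  have h := summable_mul_and_tsum_mul_le (f := fun k => ‖stokesPow (-α) R k‖)
    (g := fun k => ‖stokesPow α w k‖) (hN_nonneg _ _) (hN_nonneg _ _) (fun _ => norm_nonneg _)
    (fun _ => norm_nonneg _) (by simpa only [norm_stokesPow_sq] using hR.hasSum)
    (by simpa only [norm_stokesPow_sq] using hw.hasSum)
  simpa only [norm_stokesPow_neg_mul_norm_stokesPow] using h

lemma abs_re_mul_conj_le (z z' : ℂ) : |(z * conj z').re| ≤ ‖z‖ * ‖z'‖ := by
  rw [← RCLike.norm_conj z', ← norm_mul]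
  exact Complex.abs_re_le_norm _

lemma hasSum_hInner (hR : FinH (-α) R) (hw : FinH α w) :
    HasSum (fun k => (R k * conj (w k)).re) (hInner 0 R w) := by
  rw [hInner_zero_eq]
  exact (Summable.of_norm_bounded (summable_norm_mul_norm_and_tsum_le hR hw).1
    fun k => abs_re_mul_conj_le _ _).hasSum

lemma abs_sum_re_mul_conj_le (hR : FinH (-α) R) (hw : FinH α w) (S : Finset Freq) :
    |∑ k ∈ S, (R k * conj (w k)).re| ≤ hN (-α) R * hN α w := by
  obtain ⟨hsum, hle⟩ := summable_norm_mul_norm_and_tsum_le hR hw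
  calc |∑ k ∈ S, (R k * conj (w k)).re| ≤ ∑ k ∈ S, ‖R k‖ * ‖w k‖ :=
        (Finset.abs_sum_le_sum_abs _ _).trans
          (Finset.sum_le_sum fun k _ => abs_re_mul_conj_le _ _)
    _ ≤ hN (-α) R * hN α w := (hsum.sum_le_tsum S fun k _ => by positivity).trans hle

lemma abs_hInner_le (hR : FinH (-α) R) (hw : FinH α w) :
    |hInner 0 R w| ≤ hN (-α) R * hN α w :=
  le_of_tendsto (hasSum_hInner hR hw).abs
    (Eventually.of_forall fun S => abs_sum_re_mul_conj_le hR hw S)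

lemma hInner_sub_left (hR : FinH (-α) R) (hR' : FinH (-α) R') (hw : FinH α w) :
    hInner 0 (R - R') w = hInner 0 R w - hInner 0 R' w := by
  refine (hasSum_hInner (hR.sub hR') hw).unique ?_
  simpa only [Pi.sub_apply, sub_mul, Complex.sub_re] using
    (hasSum_hInner hR hw).sub (hasSum_hInner hR' hw)

lemma hInner_sub_right (hR : FinH (-α) R) (hw : FinH α w) (hw' : FinH α w') :
    hInner 0 R (w - w') = hInner 0 R w - hInner 0 R w' := by
  refine (hasSum_hInner hR (hw.sub hw')).unique ?_
  simpa only [Pi.sub_apply, map_sub, mul_sub, Complex.sub_re] using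
    (hasSum_hInner hR hw).sub (hasSum_hInner hR hw')

/-- `Ḣ^{-α}` is the dual of `Ḣ^α` for the `L²` pairing. -/
lemma finH_neg_and_hN_neg_le_of_abs_hInner_le {M : ℝ} (hM : 0 ≤ M)
    (h : ∀ w, FinH α w → |hInner 0 R w| ≤ M * hN α w) : FinH (-α) R ∧ hN (-α) R ≤ M := by
  refine finH_and_hN_le_of_sum_le hM fun S => ?_
  classical
  -- `w` is the extremal test function
  let w : Coef := fun k => if k ∈ S then ((lam k ^ (-α) : ℝ) : ℂ) * R k else 0
  have hw_mem (k : Freq) (hk : k ∈ S) : w k = ((lam k ^ (-α) : ℝ) : ℂ) * R k := if_pos hk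
  have hw_notMem (k : Freq) (hk : k ∉ S) : w k = 0 := if_neg hk
  set Q := ∑ k ∈ S, lam k ^ (-α) * ‖R k‖ ^ 2
  have hQ0 : 0 ≤ Q := Finset.sum_nonneg fun k _ => hSq_term_nonneg _ _ _
  have hwsum : HasSum (fun k => lam k ^ α * ‖w k‖ ^ 2) Q := by
    have hterm (k : Freq) (hk : k ∈ S) : lam k ^ α * ‖w k‖ ^ 2 = lam k ^ (-α) * ‖R k‖ ^ 2 := by
      have hpow : lam k ^ α * lam k ^ (-α) = 1 := by
        rw [← Real.rpow_add (lam_pos k), add_neg_cancel, Real.rpow_zero]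
      rw [hw_mem k hk, norm_mul, Complex.norm_of_nonneg (Real.rpow_nonneg (lam_pos k).le _)]
      linear_combination lam k ^ (-α) * ‖R k‖ ^ 2 * hpow
    rw [show Q = _ from (Finset.sum_congr rfl hterm).symm]
    exact hasSum_sum_of_ne_finset_zero fun k hk => by simp [hw_notMem k hk]
  have hpair : hInner 0 R w = Q := by
    rw [hInner_zero_eq, tsum_eq_sum fun k hk => by simp [hw_notMem k hk]]
    refine Finset.sum_congr rfl fun k hk => ?_
    rw [hw_mem k hk, map_mul, Complex.conj_ofReal, mul_left_comm, Complex.mul_conj',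
      Complex.re_ofReal_mul, ← Complex.ofReal_pow, Complex.ofReal_re]
  have hwnorm : hN α w = √Q := by rw [hN, hSq, hwsum.tsum_eq]
  have hle := h w hwsum.summable
  rw [hpair, hwnorm, abs_of_nonneg hQ0] at hle
  nlinarith [Real.sq_sqrt hQ0, Real.sqrt_nonneg Q]

end Pairing

section EnormSums

variable {c : Coef}

lemma tsum_ofReal_of_hasSum {ι : Type*} {g : ι → ℝ} {S : ℝ} (hg : ∀ i, 0 ≤ g i) (h : HasSum g S) :
    ∑' i, ENNReal.ofReal (g i) = ENNReal.ofReal S := by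
  rw [← ENNReal.ofReal_tsum_of_nonneg hg h.summable, h.tsum_eq]

lemma FinH.tsum_enorm_sq (hc : FinH 0 c) :
    ∑' n, ‖zeroExt c n‖ₑ ^ 2 = ENNReal.ofReal (hN 0 c ^ 2) := by
  rw [← tsum_ofReal_of_hasSum (fun _ => sq_nonneg _) hc.hasSum_zeroExt]
  simp only [← ofReal_norm, ENNReal.ofReal_pow (norm_nonneg _)]

lemma FinH.tsum_one_add_enorm_sq_mul_le (hc : FinH 1 c) :
    ∑' n, (1 + ‖n‖ₑ ^ 2) * ‖zeroExt c n‖ₑ ^ 2 ≤ ENNReal.ofReal (hN 1 c ^ 2) := by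
  rw [← tsum_ofReal_of_hasSum (fun k => mul_nonneg (lam_pos k).le (sq_nonneg _)) hc.hasSum_one,
    ← tsum_freq_eq (by simp)]
  refine ENNReal.tsum_le_tsum fun k => ?_
  rw [zeroExt_coe, ← ofReal_norm, ← ofReal_norm, ← ENNReal.ofReal_pow (norm_nonneg _),
    ← ENNReal.ofReal_pow (norm_nonneg _), ← ENNReal.ofReal_one,
    ← ENNReal.ofReal_add one_pos.le (sq_nonneg _), ← ENNReal.ofReal_mul (by positivity)]
  exact ENNReal.ofReal_le_ofReal
    (mul_le_mul_of_nonneg_right (one_add_norm_sq_le_lam k) (sq_nonneg _))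

lemma FinH.tsum_gradient_enorm_sq (hc : FinH 1 c) :
    ∑' n, (ENNReal.ofReal (2 * Real.pi * ‖toComplex n‖) * ‖zeroExt c n‖ₑ) ^ 2
      = ENNReal.ofReal (hN 1 c ^ 2) := by
  rw [← tsum_ofReal_of_hasSum (fun k => mul_nonneg (lam_pos k).le (sq_nonneg _)) hc.hasSum_one,
    ← tsum_freq_eq (by simp)]
  refine tsum_congr fun k => ?_
  rw [zeroExt_coe, ← ofReal_norm, ← ENNReal.ofReal_mul (by positivity),
    ← ENNReal.ofReal_pow (by positivity), mul_pow, lam_eq]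

end EnormSums

/-- The summand of the trilinear form `⟨B[c, d], w⟩`, at the frequency `k` of `w` and the frequency
`-p` of `c`, where `x = (k, p)`. -/
def trilinearTerm (c d w : Coef) (x : (ℤ × ℤ) × (ℤ × ℤ)) : ℂ :=
  zeroExt c (-x.2) * zeroExt d (x.1 + x.2) * transportKernel (-x.2) (x.1 + x.2) x.1 *
    conj (zeroExt w x.1)

section Trilinear

variable {c d w : Coef}

lemma ofReal_two_pi_mul_enorm_trilinearTerm_le (c d w : Coef) (x : (ℤ × ℤ) × (ℤ × ℤ)) :
    ENNReal.ofReal (2 * Real.pi) * ‖trilinearTerm c d w x‖ₑ ≤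
      ‖zeroExt w x.1‖ₑ * ‖zeroExt c (-x.2)‖ₑ *
        (ENNReal.ofReal (2 * Real.pi * ‖toComplex (x.1 + x.2)‖) * ‖zeroExt d (x.1 + x.2)‖ₑ) := by
  simp only [← ofReal_norm]
  simp only [← ENNReal.ofReal_mul, norm_nonneg, mul_nonneg, Real.two_pi_pos.le]
  refine ENNReal.ofReal_le_ofReal ?_
  have hK := abs_transportKernel_le_norm_snd (-x.2) (x.1 + x.2) x.1
  rw [trilinearTerm, norm_mul, norm_mul, norm_mul, RCLike.norm_conj, Complex.norm_real,
    Real.norm_eq_abs]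
  calc _ = 2 * Real.pi * (‖zeroExt w x.1‖ * ‖zeroExt c (-x.2)‖ * ‖zeroExt d (x.1 + x.2)‖) *
        |transportKernel (-x.2) (x.1 + x.2) x.1| := by ring
    _ ≤ 2 * Real.pi * (‖zeroExt w x.1‖ * ‖zeroExt c (-x.2)‖ * ‖zeroExt d (x.1 + x.2)‖) *
        ‖toComplex (x.1 + x.2)‖ := mul_le_mul_of_nonneg_left hK (by positivity)
    _ = _ := by ring

lemma ofReal_mul_sqrt_mul_sqrt_mul_pow_four {a₀ a₁ b₀ b₁ e : ℝ} (ha : 0 ≤ a₀ * a₁)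
    (hb : 0 ≤ b₀ * b₁) (he : 0 ≤ e) :
    ENNReal.ofReal (16 * √(a₀ * a₁) * √(b₀ * b₁) * e) ^ 4 =
      256 ^ 2 * (ENNReal.ofReal (a₀ ^ 2) * ENNReal.ofReal (a₁ ^ 2)) *
        (ENNReal.ofReal (b₀ ^ 2) * ENNReal.ofReal (b₁ ^ 2)) * ENNReal.ofReal (e ^ 2) ^ 2 := by
  have h256 : (256 : ℝ≥0∞) = ENNReal.ofReal 256 := by norm_num
  rw [h256, ← ENNReal.ofReal_pow (by positivity), ← ENNReal.ofReal_pow (by positivity),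
    ← ENNReal.ofReal_pow (by positivity)]
  iterate 5 rw [← ENNReal.ofReal_mul (by positivity)]
  rw [show (16 * √(a₀ * a₁) * √(b₀ * b₁) * e) ^ 4 =
    65536 * (√(a₀ * a₁) ^ 2) ^ 2 * (√(b₀ * b₁) ^ 2) ^ 2 * e ^ 4 by ring,
    Real.sq_sqrt ha, Real.sq_sqrt hb]
  congr 1
  ring

lemma tsum_enorm_trilinearTerm_le (hc : FinH 1 c) (hd : FinH 1 d) (hw : FinH 1 w) :
    ENNReal.ofReal (2 * Real.pi) * ∑' x, ‖trilinearTerm c d w x‖ₑ ≤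
      ENNReal.ofReal (16 * √(hN 0 w * hN 1 w) * √(hN 0 c * hN 1 c) * hN 1 d) := by
  have hc0 := hc.mono zero_le_one
  have hw0 := hw.mono zero_le_one
  have hneg (F : ℤ × ℤ → ℝ≥0∞) : ∑' n, F (-n) = ∑' n, F n := (Equiv.neg _).tsum_eq F
  have hbound := tsum_mul_mul_add_pow_four_le (fun n => ‖zeroExt w n‖ₑ)
    (fun n => ‖zeroExt c (-n)‖ₑ)
    (fun n => ENNReal.ofReal (2 * Real.pi * ‖toComplex n‖) * ‖zeroExt d n‖ₑ)
  have hcneg := hneg fun n => (1 + ‖n‖ₑ ^ 2) * ‖zeroExt c n‖ₑ ^ 2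
  simp only [enorm_neg] at hcneg
  rw [hneg fun n => ‖zeroExt c n‖ₑ ^ 2, hcneg, hw0.tsum_enorm_sq, hc0.tsum_enorm_sq,
    hd.tsum_gradient_enorm_sq] at hbound
  rw [← ENNReal.tsum_mul_left]
  refine (ENNReal.tsum_le_tsum (ofReal_two_pi_mul_enorm_trilinearTerm_le c d w)).trans
    ((ENNReal.pow_le_pow_left_iff (n := 4) (by norm_num)).mp ?_)
  rw [ofReal_mul_sqrt_mul_sqrt_mul_pow_four (mul_nonneg (hN_nonneg 0 w) (hN_nonneg 1 w))
    (mul_nonneg (hN_nonneg 0 c) (hN_nonneg 1 c)) (hN_nonneg 1 d)]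
  refine hbound.trans ?_
  gcongr
  · exact hw.tsum_one_add_enorm_sq_mul_le
  · exact hc.tsum_one_add_enorm_sq_mul_le

lemma summable_trilinearTerm (hc : FinH 1 c) (hd : FinH 1 d) (hw : FinH 1 w) :
    Summable (trilinearTerm c d w) := by
  refine Summable.of_enorm fun htop => ?_
  have hle := tsum_enorm_trilinearTerm_le hc hd hw
  rw [htop, ENNReal.mul_top (ENNReal.ofReal_pos.mpr Real.two_pi_pos).ne'] at hle
  exact ENNReal.ofReal_ne_top (top_le_iff.mp hle)

lemma two_pi_I_mul_tsum_trilinearTerm (c d w : Coef) (k : Freq) :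
    ((2 * Real.pi : ℝ) : ℂ) * Complex.I * ∑' p, trilinearTerm c d w (k.1, p)
      = Bc c d k * conj (w k) := by
  have hterm (m : ℤ × ℤ) : trilinearTerm c d w (k.1, -m) =
      zeroExt c m * zeroExt d (k.1 - m) * transportKernel m (k.1 - m) k.1 * conj (w k) := by
    rw [trilinearTerm, neg_neg, ← sub_eq_add_neg, zeroExt_coe]
  rw [← (Equiv.neg (ℤ × ℤ)).tsum_eq, Bc_eq, mul_assoc (_ * Complex.I), ← tsum_mul_right]
  exact congrArg _ (tsum_congr hterm)

lemma hInner_Bc_eq (hc : FinH 1 c) (hd : FinH 1 d) (hw : FinH 1 w) :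
    hInner 0 (Bc c d) w =
      (((2 * Real.pi : ℝ) : ℂ) * Complex.I * ∑' x, trilinearTerm c d w x).re := by
  have hsum := (summable_trilinearTerm hc hd hw)
  have h0 : ∑' p, trilinearTerm c d w (0, p) = 0 := by simp [trilinearTerm]
  have hfreq := ((hasSum_freq_iff h0).mpr
    (hsum.hasSum.prod_fiberwise fun k => (hsum.prod_factor k).hasSum)).mul_left
      (((2 * Real.pi : ℝ) : ℂ) * Complex.I)
  simp only [two_pi_I_mul_tsum_trilinearTerm] at hfreq
  rw [hInner_zero_eq, (Complex.hasSum_re hfreq).tsum_eq]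

lemma abs_hInner_Bc_le (hc : FinH 1 c) (hd : FinH 1 d) (hw : FinH 1 w) :
    |hInner 0 (Bc c d) w| ≤ 16 * √(hN 0 w * hN 1 w) * √(hN 0 c * hN 1 c) * hN 1 d := by
  have hd1 := hN_nonneg 1 d
  rw [hInner_Bc_eq hc hd hw]
  refine (Complex.abs_re_le_norm _).trans ((ENNReal.ofReal_le_ofReal_iff (by positivity)).mp ?_)
  refine le_trans ?_ (tsum_enorm_trilinearTerm_le hc hd hw)
  rw [ofReal_norm, enorm_mul, enorm_mul, ← ofReal_norm, ← ofReal_norm Complex.I, Complex.norm_I,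
    ENNReal.ofReal_one, mul_one, Complex.norm_of_nonneg Real.two_pi_pos.le]
  gcongr
  exact enorm_tsum_le_tsum_enorm

/-- The involution `(k, p) ↦ (k + p, -p)`, which exchanges the frequencies of the transported field
and of the test function. -/
def swapFreq : (ℤ × ℤ) × (ℤ × ℤ) ≃ (ℤ × ℤ) × (ℤ × ℤ) :=
  Function.Involutive.toPerm (fun x => (x.1 + x.2, -x.2)) fun x => by simp

lemma IsReal.trilinearTerm_swapFreq (hc : IsReal c) (d w : Coef) (x : (ℤ × ℤ) × (ℤ × ℤ)) :
    trilinearTerm c w d (swapFreq x) = conj (trilinearTerm c d w x) := by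
  have hswap : swapFreq x = (x.1 + x.2, -x.2) := rfl
  simp only [trilinearTerm, hswap, neg_neg, add_neg_cancel_right, transportKernel_swap,
    hc.zeroExt_neg, map_mul, map_neg, Complex.conj_conj, Complex.conj_ofReal, Complex.ofReal_neg]
  ring

lemma IsReal.hInner_Bc_swap (hreal : IsReal c) (hc : FinH 1 c) (hd : FinH 1 d) (hw : FinH 1 w) :
    hInner 0 (Bc c w) d = -hInner 0 (Bc c d) w := by
  rw [hInner_Bc_eq hc hw hd, hInner_Bc_eq hc hd hw, ← swapFreq.tsum_eq]
  simp only [hreal.trilinearTerm_swapFreq, ← Complex.conj_tsum]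
  simp

lemma IsReal.hInner_Bc_self (hreal : IsReal c) (hc : FinH 1 c) (hd : FinH 1 d) :
    hInner 0 (Bc c d) d = 0 := by
  linarith [hreal.hInner_Bc_swap hc hd hd]

lemma sqrt_hN_zero_mul_hN_one_le (hc : FinH 1 c) : √(hN 0 c * hN 1 c) ≤ hN 1 c :=
  Real.sqrt_le_iff.mpr ⟨hN_nonneg 1 c, by
    rw [sq]
    exact mul_le_mul_of_nonneg_right (hN_mono hc zero_le_one) (hN_nonneg 1 c)⟩

lemma finH_neg_one_Bc_and_hN_le (hc : FinH 1 c) (hd : FinH 1 d) :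
    FinH (-1) (Bc c d) ∧ hN (-1) (Bc c d) ≤ 16 * hN 1 c * hN 1 d := by
  have hc1 := hN_nonneg 1 c
  have hd1 := hN_nonneg 1 d
  refine finH_neg_and_hN_neg_le_of_abs_hInner_le (by positivity) fun w hw => ?_
  calc |hInner 0 (Bc c d) w| ≤ 16 * √(hN 0 w * hN 1 w) * √(hN 0 c * hN 1 c) * hN 1 d :=
        abs_hInner_Bc_le hc hd hw
    _ ≤ 16 * hN 1 w * hN 1 c * hN 1 d := by
        have hw1 := hN_nonneg 1 w
        gcongr <;> exact sqrt_hN_zero_mul_hN_one_le ‹_›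
    _ = 16 * hN 1 c * hN 1 d * hN 1 w := by ring

/-- Antisymmetry moves the derivative onto the test function, so only one derivative is needed. -/
lemma IsReal.hN_neg_one_Bc_self_le (hreal : IsReal c) (hc : FinH 1 c) :
    hN (-1) (Bc c c) ≤ 16 * hN 0 c * hN 1 c := by
  have hc01 := mul_nonneg (hN_nonneg 0 c) (hN_nonneg 1 c)
  refine (finH_neg_and_hN_neg_le_of_abs_hInner_le (by linarith) fun w hw => ?_).2
  calc |hInner 0 (Bc c c) w| = |hInner 0 (Bc c w) c| := by
        rw [hreal.hInner_Bc_swap hc hc hw, abs_neg]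
    _ ≤ 16 * √(hN 0 c * hN 1 c) * √(hN 0 c * hN 1 c) * hN 1 w := abs_hInner_Bc_le hc hw hc
    _ = 16 * hN 0 c * hN 1 c * hN 1 w := by
        rw [mul_assoc 16, Real.mul_self_sqrt hc01]
        ring

end Trilinear

lemma hasDerivAt_integral_of_continuousOn_Icc {E : Type*} [NormedAddCommGroup E]
    [NormedSpace ℝ E] [CompleteSpace E] {f : ℝ → E} {a b t : ℝ}
    (hf : ContinuousOn f (Icc a b)) (ht : t ∈ Ioo a b) :
    HasDerivAt (fun s => ∫ x in a..s, f x) (f t) t := by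
  have hnhds : Icc a b ∈ 𝓝 t := Icc_mem_nhds ht.1 ht.2
  have hint : IntervalIntegrable f volume a t :=
    (hf.mono (Icc_subset_Icc_right ht.2.le)).intervalIntegrable_of_Icc ht.1.le
  exact intervalIntegral.integral_hasDerivAt_right hint
    ((hf.stronglyMeasurableAtFilter_nhdsWithin measurableSet_Icc t).filter_mono
      (nhdsWithin_eq_nhds.mpr hnhds).ge) (hf.continuousAt hnhds)

lemma continuousOn_integral_of_continuousOn_Icc {E : Type*} [NormedAddCommGroup E]
    [NormedSpace ℝ E] {f : ℝ → E} {a b : ℝ} (hab : a ≤ b) (hf : ContinuousOn f (Icc a b)) :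
    ContinuousOn (fun s => ∫ x in a..s, f x) (Icc a b) := by
  rw [← uIcc_of_le hab] at hf ⊢
  exact intervalIntegral.continuousOn_primitive_interval hf.integrableOn_uIcc

lemma add_integral_le_exp_integral_mul {T : ℝ} {e e' g h d : ℝ → ℝ}
    (he : ContinuousOn e (Icc 0 T)) (hg : ContinuousOn g (Icc 0 T))
    (hh : ContinuousOn h (Icc 0 T)) (hd : ContinuousOn d (Icc 0 T))
    (hg0 : ∀ t, 0 ≤ g t) (hh0 : ∀ t, 0 ≤ h t) (hd0 : ∀ t, 0 ≤ d t)
    (hderiv : ∀ t ∈ Ioo 0 T, HasDerivAt e (e' t) t)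
    (hle : ∀ t ∈ Ioo 0 T, e' t + d t ≤ g t * e t + h t) {t : ℝ} (ht : t ∈ Icc 0 T) :
    e t + ∫ s in 0..t, d s
      ≤ Real.exp (∫ s in 0..t, g s) * (e 0 + ∫ s in 0..t, h s) := by
  have hT : 0 ≤ T := ht.1.trans ht.2
  set G : ℝ → ℝ := fun t => ∫ s in 0..t, g s
  set H : ℝ → ℝ := fun t => ∫ s in 0..t, h s
  set D : ℝ → ℝ := fun t => ∫ s in 0..t, d s
  have hG := continuousOn_integral_of_continuousOn_Icc hT hg
  have hH := continuousOn_integral_of_continuousOn_Icc hT hh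
  have hD := continuousOn_integral_of_continuousOn_Icc hT hd
  have hz (s : ℝ) (hs : s ∈ Ioo 0 T) :
      HasDerivAt (fun s => Real.exp (-G s) * (e s + D s) - H s)
        (Real.exp (-G s) * -g s * (e s + D s) + Real.exp (-G s) * (e' s + d s) - h s) s :=
    (((hasDerivAt_integral_of_continuousOn_Icc hg hs).neg.exp).mul ((hderiv s hs).add
      (hasDerivAt_integral_of_continuousOn_Icc hd hs))).sub
        (hasDerivAt_integral_of_continuousOn_Icc hh hs)
  have hanti : AntitoneOn (fun s => Real.exp (-G s) * (e s + D s) - H s) (Icc 0 T) := by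
    refine antitoneOn_of_hasDerivWithinAt_nonpos (convex_Icc 0 T)
      (((Real.continuous_exp.comp_continuousOn hG.neg).mul (he.add hD)).sub hH)
      (fun s hs => (hz s (interior_Icc.subset hs)).hasDerivWithinAt) fun s hs => ?_
    rw [interior_Icc] at hs
    have hGs : Real.exp (-G s) ≤ 1 := Real.exp_le_one_iff.mpr
      (neg_nonpos.mpr (intervalIntegral.integral_nonneg hs.1.le fun _ _ => hg0 _))
    have hDs : 0 ≤ g s * D s :=
      mul_nonneg (hg0 s) (intervalIntegral.integral_nonneg hs.1.le fun _ _ => hd0 _)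
    have hrate : Real.exp (-G s) * (e' s + d s - g s * e s - g s * D s) ≤ h s := calc
      _ ≤ Real.exp (-G s) * h s := by
        gcongr
        linarith [hle s hs]
      _ ≤ h s := mul_le_of_le_one_left (hh0 s) hGs
    linarith
  have hfinal : Real.exp (-G t) * (e t + D t) - H t ≤ e 0 := by
    simpa [G, D, H] using hanti (left_mem_Icc.mpr hT) ht ht.1
  rwa [sub_le_iff_le_add, Real.exp_neg, inv_mul_le_iff₀ (Real.exp_pos _)] at hfinal

lemma rpow_mul_norm_le_hN {α : ℝ} {c : Coef} (h : FinH α c) (k : Freq) :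
    lam k ^ (α / 2) * ‖c k‖ ≤ hN α c := by
  refine le_of_sq_le_sq ?_ (hN_nonneg α c)
  rw [mul_pow, ← Real.rpow_mul_natCast (lam_pos k).le, Nat.cast_ofNat,
    div_mul_cancel₀ α two_ne_zero]
  exact le_hasSum h.hasSum k fun _ _ => hSq_term_nonneg _ _ _

/-- A curve `[0,T] → Ḣ^α` that is continuous for the norm. -/
structure IsTrajectory (α T : ℝ) (v : ℝ → Coef) : Prop where
  finH : ∀ t ∈ Icc 0 T, FinH α (v t)
  tendsto_sub : ∀ t ∈ Icc 0 T, Tendsto (fun s => hN α (v s - v t)) (𝓝[Icc 0 T] t) (𝓝 0)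

namespace IsTrajectory

variable {α β T : ℝ} {v w R a b : ℝ → Coef}

lemma of_hN_sub_le {g : ℝ → ℝ → ℝ} (hfin : ∀ t ∈ Icc 0 T, FinH α (v t))
    (hg : ∀ t ∈ Icc 0 T, Tendsto (g t) (𝓝[Icc 0 T] t) (𝓝 0))
    (hle : ∀ t ∈ Icc 0 T, ∀ s ∈ Icc 0 T, hN α (v s - v t) ≤ g t s) : IsTrajectory α T v where
  finH := hfin
  tendsto_sub t ht := squeeze_zero' (Eventually.of_forall fun _ => hN_nonneg _ _)
    (eventually_nhdsWithin_of_forall (hle t ht)) (hg t ht)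

lemma mono (hv : IsTrajectory β T v) (h : α ≤ β) : IsTrajectory α T v :=
  of_hN_sub_le (fun t ht => (hv.finH t ht).mono h) hv.tendsto_sub fun t ht s hs =>
    hN_mono ((hv.finH s hs).sub (hv.finH t ht)) h

lemma add (hv : IsTrajectory α T v) (hw : IsTrajectory α T w) : IsTrajectory α T (v + w) := by
  refine of_hN_sub_le (g := fun t s => hN α (v s - v t) + hN α (w s - w t))
    (fun t ht => (hv.finH t ht).add (hw.finH t ht))
    (fun t ht => by simpa using (hv.tendsto_sub t ht).add (hw.tendsto_sub t ht))
    fun t ht s hs => ?_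
  rw [Pi.add_apply, Pi.add_apply, add_sub_add_comm]
  exact hN_add_le ((hv.finH s hs).sub (hv.finH t ht)) ((hw.finH s hs).sub (hw.finH t ht))

lemma smul (hv : IsTrajectory α T v) (r : ℝ) : IsTrajectory α T (r • v) := by
  refine of_hN_sub_le (g := fun t s => |r| * hN α (v s - v t))
    (fun t ht => (hv.finH t ht).smul r)
    (fun t ht => by simpa using (hv.tendsto_sub t ht).const_mul |r|) fun t _ s _ => ?_
  rw [Pi.smul_apply, Pi.smul_apply, ← smul_sub, hN_smul]

lemma const {c : Coef} (hc : FinH α c) : IsTrajectory α T fun _ => c :=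
  of_hN_sub_le (g := 0) (fun _ _ => hc) (fun _ _ => tendsto_const_nhds)
    fun _ _ _ _ => by rw [sub_self, hN_zero]; rfl

/-- The norm-continuous curves in `Ḣ^α` form a linear space. -/
def submodule (α T : ℝ) : Submodule ℝ (ℝ → Coef) where
  carrier := {v | IsTrajectory α T v}
  add_mem' := add
  zero_mem' := const (finH_zero α)
  smul_mem' r _ hv := hv.smul r

lemma sub (hv : IsTrajectory α T v) (hw : IsTrajectory α T w) : IsTrajectory α T (v - w) :=
  (submodule α T).sub_mem hv hw

lemma sum_smul {ι : Type*} (s : Finset ι) (r : ι → ℝ) {v : ι → ℝ → Coef}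
    (hv : ∀ i, IsTrajectory α T (v i)) : IsTrajectory α T (∑ i ∈ s, r i • v i) :=
  (submodule α T).sum_mem fun i _ => (submodule α T).smul_mem (r i) (hv i)

lemma continuousOn_hN (hv : IsTrajectory α T v) :
    ContinuousOn (fun t => hN α (v t)) (Icc 0 T) := by
  intro t ht
  refine tendsto_iff_norm_sub_tendsto_zero.mpr (squeeze_zero' (Eventually.of_forall fun _ =>
    norm_nonneg _) (eventually_nhdsWithin_of_forall fun s hs => ?_) (hv.tendsto_sub t ht))
  exact abs_hN_sub_hN_le (hv.finH s hs) (hv.finH t ht)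

lemma continuousOn_apply (hv : IsTrajectory α T v) (k : Freq) :
    ContinuousOn (fun t => v t k) (Icc 0 T) := by
  intro t ht
  have hpos := Real.rpow_pos_of_pos (lam_pos k) (α / 2)
  have hlim : Tendsto (fun s => (lam k ^ (α / 2))⁻¹ * hN α (v s - v t)) (𝓝[Icc 0 T] t) (𝓝 0) := by
    simpa using (hv.tendsto_sub t ht).const_mul (lam k ^ (α / 2))⁻¹
  refine tendsto_iff_norm_sub_tendsto_zero.mpr (squeeze_zero' (Eventually.of_forall fun _ =>
    norm_nonneg _) (eventually_nhdsWithin_of_forall fun s hs => ?_) hlim)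
  rw [inv_mul_eq_div, le_div_iff₀' hpos]
  exact rpow_mul_norm_le_hN ((hv.finH s hs).sub (hv.finH t ht)) k

lemma continuousOn_hInner (hR : IsTrajectory (-α) T R) (hv : IsTrajectory α T v) :
    ContinuousOn (fun t => hInner 0 (R t) (v t)) (Icc 0 T) := by
  intro t ht
  have hlim : Tendsto (fun s => hN (-α) (R s - R t) * hN α (v s)
      + hN (-α) (R t) * hN α (v s - v t)) (𝓝[Icc 0 T] t) (𝓝 0) := by
    simpa using ((hR.tendsto_sub t ht).mul (hv.continuousOn_hN t ht)).add
      ((hv.tendsto_sub t ht).const_mul (hN (-α) (R t)))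
  refine tendsto_iff_norm_sub_tendsto_zero.mpr (squeeze_zero' (Eventually.of_forall fun _ =>
    norm_nonneg _) (eventually_nhdsWithin_of_forall fun s hs => ?_) hlim)
  have hsplit : hInner 0 (R s) (v s) - hInner 0 (R t) (v t)
      = hInner 0 (R s - R t) (v s) + hInner 0 (R t) (v s - v t) := by
    rw [hInner_sub_left (hR.finH s hs) (hR.finH t ht) (hv.finH s hs),
      hInner_sub_right (hR.finH t ht) (hv.finH s hs) (hv.finH t ht)]
    ring
  rw [hsplit]
  exact (norm_add_le _ _).trans (add_le_add
    (abs_hInner_le ((hR.finH s hs).sub (hR.finH t ht)) (hv.finH s hs))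
    (abs_hInner_le (hR.finH t ht) ((hv.finH s hs).sub (hv.finH t ht))))

lemma Bc (ha : IsTrajectory 1 T a) (hb : IsTrajectory 1 T b) :
    IsTrajectory (-1) T fun t => Bc (a t) (b t) := by
  have zero_le {c : Coef} (hc : FinH 1 c) : FinH 0 c := hc.mono zero_le_one
  refine of_hN_sub_le (g := fun t s => 16 * hN 1 (a s - a t) * hN 1 (b s)
      + 16 * hN 1 (a t) * hN 1 (b s - b t))
    (fun t ht => (finH_neg_one_Bc_and_hN_le (ha.finH t ht) (hb.finH t ht)).1)
    (fun t ht => ?_) fun t ht s hs => ?_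
  · simpa using (((ha.tendsto_sub t ht).const_mul 16).mul (hb.continuousOn_hN t ht)).add
      ((hb.tendsto_sub t ht).const_mul (16 * hN 1 (a t)))
  · have has := ha.finH s hs
    have hat := ha.finH t ht
    have hbs := hb.finH s hs
    have hbt := hb.finH t ht
    have hsplit : NS2D.Bc (a s) (b s) - NS2D.Bc (a t) (b t)
        = NS2D.Bc (a s - a t) (b s) + NS2D.Bc (a t) (b s - b t) := by
      rw [Bc_sub_left (zero_le has) (zero_le hat) (zero_le hbs),
        Bc_sub_right (zero_le hat) (zero_le hbs) (zero_le hbt), sub_add_sub_cancel]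
    have hleft := finH_neg_one_Bc_and_hN_le (has.sub hat) hbs
    have hright := finH_neg_one_Bc_and_hN_le hat (hbs.sub hbt)
    rw [hsplit]
    exact (hN_add_le hleft.1 hright.1).trans (add_le_add hleft.2 hright.2)

end IsTrajectory

/-- `v' = R - νAv` on `(0,T)`, mode by mode, for `v` continuous into `Ḣ¹` and `R` continuous into
`Ḣ⁻¹`. -/
structure IsHeatTrajectory (ν T : ℝ) (R v : ℝ → Coef) : Prop where
  trajectory : IsTrajectory 1 T v
  forcing : IsTrajectory (-1) T R
  hasDerivAt : ∀ k, ∀ t ∈ Ioo 0 T,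
    HasDerivAt (fun s => v s k) (R t k - ((ν * lam k : ℝ) : ℂ) * v t k) t

namespace IsHeatTrajectory

variable {ν T : ℝ} {R v : ℝ → Coef}

lemma hasDerivAt_sum_norm_sq (h : IsHeatTrajectory ν T R v) (S : Finset Freq) {t : ℝ}
    (ht : t ∈ Ioo 0 T) :
    HasDerivAt (fun s => ∑ k ∈ S, ‖v s k‖ ^ 2)
      (2 * ∑ k ∈ S, (R t k * conj (v t k)).re - 2 * ν * ∑ k ∈ S, lam k * ‖v t k‖ ^ 2) t := by
  rw [Finset.mul_sum, Finset.mul_sum, ← Finset.sum_sub_distrib]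
  refine HasDerivAt.fun_sum fun k _ => (h.hasDerivAt k t ht).norm_sq.congr_deriv ?_
  rw [Complex.inner, sub_mul, Complex.sub_re, mul_assoc, Complex.mul_conj', Complex.re_ofReal_mul,
    ← Complex.ofReal_pow, Complex.ofReal_re]
  ring

/-- The energy balance of `IsHeatTrajectory`: the right-hand side of `d/dt ‖v‖²`. -/
def energyRate (ν : ℝ) (R v : ℝ → Coef) (t : ℝ) : ℝ :=
  2 * hInner 0 (R t) (v t) - 2 * ν * hN 1 (v t) ^ 2

lemma continuousOn_energyRate (h : IsHeatTrajectory ν T R v) :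
    ContinuousOn (energyRate ν R v) (Icc 0 T) :=
  ((h.forcing.continuousOn_hInner h.trajectory).const_mul 2).sub
    ((h.trajectory.continuousOn_hN.pow 2).const_mul (2 * ν))

lemma tendsto_integral_energyRate (h : IsHeatTrajectory ν T R v) (hν : 0 ≤ ν) {t : ℝ}
    (ht : t ∈ Icc 0 T) :
    Tendsto (fun S : Finset Freq => ∫ s in 0..t,
      (2 * ∑ k ∈ S, (R s k * conj (v s k)).re - 2 * ν * ∑ k ∈ S, lam k * ‖v s k‖ ^ 2)) atTop
      (𝓝 (∫ s in 0..t, energyRate ν R v s)) := by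
  have hsub : uIoc 0 t ⊆ Icc 0 T := by
    rw [uIoc_of_le ht.1]
    exact Ioc_subset_Icc_self.trans (Icc_subset_Icc_right ht.2)
  have hfin (s : ℝ) (hs : s ∈ uIoc 0 t) : FinH 1 (v s) := h.trajectory.finH s (hsub hs)
  refine intervalIntegral.tendsto_integral_filter_of_dominated_convergence
    (fun s => 2 * (hN (-1) (R s) * hN 1 (v s)) + 2 * ν * hN 1 (v s) ^ 2)
    (Eventually.of_forall fun S => ?_) (Eventually.of_forall fun S => ?_) ?_ ?_
  · refine (ContinuousOn.mono ?_ hsub).aestronglyMeasurable measurableSet_uIoc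
    have hR := h.forcing.continuousOn_apply
    have hv := h.trajectory.continuousOn_apply
    fun_prop
  · refine ae_of_all _ fun s hs => (norm_sub_le _ _).trans (add_le_add ?_ ?_)
    · rw [norm_mul, Real.norm_ofNat]
      exact mul_le_mul_of_nonneg_left
        (abs_sum_re_mul_conj_le (h.forcing.finH s (hsub hs)) (hfin s hs) S) zero_le_two
    · have hterm (k : Freq) : 0 ≤ lam k * ‖v s k‖ ^ 2 := mul_nonneg (lam_pos k).le (sq_nonneg _)
      rw [Real.norm_of_nonneg (mul_nonneg (by positivity) (Finset.sum_nonneg fun k _ => hterm k))]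
      exact mul_le_mul_of_nonneg_left
        (sum_le_hasSum S (fun k _ => hterm k) (hfin s hs).hasSum_one) (by positivity)
  · refine ContinuousOn.intervalIntegrable ?_
    rw [uIcc_of_le ht.1]
    exact (((h.forcing.continuousOn_hN.mul h.trajectory.continuousOn_hN).const_mul 2).add
      ((h.trajectory.continuousOn_hN.pow 2).const_mul (2 * ν))).mono (Icc_subset_Icc_right ht.2)
  · exact ae_of_all _ fun s hs =>
      ((hasSum_hInner (h.forcing.finH s (hsub hs)) (hfin s hs)).const_mul 2).sub
        ((hfin s hs).hasSum_one.const_mul (2 * ν))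

lemma hN_sq_sub_hN_sq_eq_integral (h : IsHeatTrajectory ν T R v) (hν : 0 ≤ ν) {t : ℝ}
    (ht : t ∈ Icc 0 T) :
    hN 0 (v t) ^ 2 - hN 0 (v 0) ^ 2 = ∫ s in 0..t, energyRate ν R v s := by
  have hR := h.forcing.continuousOn_apply
  have hv := h.trajectory.continuousOn_apply
  have hsub : Icc 0 t ⊆ Icc 0 T := Icc_subset_Icc_right ht.2
  have hftc (S : Finset Freq) : ∫ s in 0..t,
      (2 * ∑ k ∈ S, (R s k * conj (v s k)).re - 2 * ν * ∑ k ∈ S, lam k * ‖v s k‖ ^ 2)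
      = ∑ k ∈ S, ‖v t k‖ ^ 2 - ∑ k ∈ S, ‖v 0 k‖ ^ 2 := by
    refine intervalIntegral.integral_eq_sub_of_hasDerivAt_of_le ht.1
      (ContinuousOn.mono (by fun_prop) hsub)
      (fun s hs => h.hasDerivAt_sum_norm_sq S (Ioo_subset_Ioo_right ht.2 hs))
      (ContinuousOn.intervalIntegrable ?_)
    rw [uIcc_of_le ht.1]
    exact ContinuousOn.mono (by fun_prop) hsub
  have hlim := h.tendsto_integral_energyRate hν ht
  simp only [hftc] at hlim
  have hfin (s : ℝ) (hs : s ∈ Icc 0 T) : FinH 0 (v s) :=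
    (h.trajectory.finH s hs).mono zero_le_one
  exact tendsto_nhds_unique (Tendsto.sub (hfin t ht).hasSum_zero
    (hfin 0 (left_mem_Icc.mpr (ht.1.trans ht.2))).hasSum_zero) hlim

lemma hasDerivAt_hN_sq (h : IsHeatTrajectory ν T R v) (hν : 0 ≤ ν) {t : ℝ} (ht : t ∈ Ioo 0 T) :
    HasDerivAt (fun s => hN 0 (v s) ^ 2) (energyRate ν R v t) t := by
  refine ((hasDerivAt_integral_of_continuousOn_Icc h.continuousOn_energyRate ht).add_const
    (hN 0 (v 0) ^ 2)).congr_of_eventuallyEq ?_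
  filter_upwards [Icc_mem_nhds ht.1 ht.2] with s hs
  rw [← h.hN_sq_sub_hN_sq_eq_integral hν hs, sub_add_cancel]

end IsHeatTrajectory

namespace IsTrajectory

variable {α T : ℝ} {v w : ℝ → Coef}

lemma congr (hv : IsTrajectory α T v) (h : ∀ t ∈ Icc 0 T, v t = w t) : IsTrajectory α T w :=
  of_hN_sub_le (g := fun t s => hN α (v s - v t)) (fun t ht => h t ht ▸ hv.finH t ht)
    hv.tendsto_sub fun t ht s hs => by rw [h t ht, h s hs]

end IsTrajectory

namespace IsHeatTrajectory

variable {ν T : ℝ} {R R' v w : ℝ → Coef}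

lemma congr_forcing (h : IsHeatTrajectory ν T R v) (hR : ∀ t ∈ Icc 0 T, R t = R' t) :
    IsHeatTrajectory ν T R' v where
  trajectory := h.trajectory
  forcing := h.forcing.congr hR
  hasDerivAt k t ht := hR t (Ioo_subset_Icc_self ht) ▸ h.hasDerivAt k t ht

lemma sub (h : IsHeatTrajectory ν T R v) (h' : IsHeatTrajectory ν T R' w) :
    IsHeatTrajectory ν T (R - R') (v - w) where
  trajectory := h.trajectory.sub h'.trajectory
  forcing := h.forcing.sub h'.forcing
  hasDerivAt k t ht := ((h.hasDerivAt k t ht).fun_sub (h'.hasDerivAt k t ht)).congr_deriv (by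
    simp only [Pi.sub_apply]
    ring)

lemma sum_smul {ι : Type*} (s : Finset ι) (r : ι → ℝ) {R v : ι → ℝ → Coef}
    (h : ∀ i, IsHeatTrajectory ν T (R i) (v i)) :
    IsHeatTrajectory ν T (∑ i ∈ s, r i • R i) (∑ i ∈ s, r i • v i) where
  trajectory := .sum_smul s r fun i => (h i).trajectory
  forcing := .sum_smul s r fun i => (h i).forcing
  hasDerivAt k t ht := by
    simp only [Finset.sum_apply, Pi.smul_apply]
    convert! HasDerivAt.fun_sum fun i (_ : i ∈ s) =>
      ((h i).hasDerivAt k t ht).const_smul (r i) using 1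
    simp only [smul_sub, Finset.sum_sub_distrib, Finset.mul_sum, mul_smul_comm]

end IsHeatTrajectory

lemma two_mul_hInner_transport_le {ν : ℝ} (hν : 0 < ν) {N a b v : Coef} (hN1 : FinH (-1) N)
    (ha : MemH 1 a) (hb : FinH 1 b) (hv : FinH 1 v) :
    2 * hInner 0 (N - Bc a v - Bc v b) v ≤
      ν * hN 1 v ^ 2 + 512 / ν * hN 1 b ^ 2 * hN 0 v ^ 2 + 2 / ν * hN (-1) N ^ 2 := by
  have hav := (finH_neg_one_Bc_and_hN_le ha.2 hv).1
  have hvb := (finH_neg_one_Bc_and_hN_le hv hb).1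
  have hforcing : 2 * hInner 0 N v ≤ ν / 2 * hN 1 v ^ 2 + 2 / ν * hN (-1) N ^ 2 := by
    have hyoung : ν / 2 * hN 1 v ^ 2 + 2 / ν * hN (-1) N ^ 2 - 2 * (hN (-1) N * hN 1 v)
        = (ν * hN 1 v - 2 * hN (-1) N) ^ 2 / (2 * ν) := by
      field_simp
      ring
    have : 0 ≤ (ν * hN 1 v - 2 * hN (-1) N) ^ 2 / (2 * ν) := by positivity
    linarith [le_of_abs_le (abs_hInner_le hN1 hv)]
  have hstretch : -(2 * hInner 0 (Bc v b) v) ≤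
      ν / 2 * hN 1 v ^ 2 + 512 / ν * hN 1 b ^ 2 * hN 0 v ^ 2 := by
    have hyoung : ν / 2 * hN 1 v ^ 2 + 512 / ν * hN 1 b ^ 2 * hN 0 v ^ 2
        - 2 * (16 * (hN 0 v * hN 1 v) * hN 1 b)
        = (ν * hN 1 v - 32 * (hN 0 v * hN 1 b)) ^ 2 / (2 * ν) := by
      field_simp
      ring
    have : 0 ≤ (ν * hN 1 v - 32 * (hN 0 v * hN 1 b)) ^ 2 / (2 * ν) := by positivity
    have htri := abs_hInner_Bc_le hv hb hv
    rw [mul_assoc 16, Real.mul_self_sqrt (mul_nonneg (hN_nonneg _ _) (hN_nonneg _ _))] at htri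
    linarith [neg_le_of_abs_le htri]
  rw [hInner_sub_left (α := 1) (hN1.sub hav) hvb hv, hInner_sub_left hN1 hav hv,
    ha.1.hInner_Bc_self ha.2 hv]
  linarith

lemma IsHeatTrajectory.hN_sq_add_integral_le {ν T : ℝ} {N a b v : ℝ → Coef} (hν : 0 < ν)
    (h : IsHeatTrajectory ν T (fun t => N t - Bc (a t) (v t) - Bc (v t) (b t)) v)
    (hforcing : IsTrajectory (-1) T N) (ha : ∀ t ∈ Icc 0 T, MemH 1 (a t)) (hb : IsTrajectory 1 T b)
    {t : ℝ} (ht : t ∈ Icc 0 T) :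
    hN 0 (v t) ^ 2 + ν * ∫ s in 0..t, hN 1 (v s) ^ 2 ≤
      Real.exp (512 / ν * ∫ s in 0..t, hN 1 (b s) ^ 2) *
        (hN 0 (v 0) ^ 2 + 2 / ν * ∫ s in 0..t, hN (-1) (N s) ^ 2) := by
  simp only [← intervalIntegral.integral_const_mul]
  refine add_integral_le_exp_integral_mul
    ((h.trajectory.mono zero_le_one).continuousOn_hN.fun_pow 2)
    ((hb.continuousOn_hN.fun_pow 2).const_mul _) ((hforcing.continuousOn_hN.fun_pow 2).const_mul _)
    ((h.trajectory.continuousOn_hN.fun_pow 2).const_mul _) (fun _ => by positivity)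
    (fun _ => by positivity) (fun _ => by positivity)
    (fun s hs => h.hasDerivAt_hN_sq hν.le hs) (fun s hs => ?_) ht
  have hs := Ioo_subset_Icc_self hs
  have := two_mul_hInner_transport_le hν (hforcing.finH s hs) (ha s hs) (hb.finH s hs)
    (h.trajectory.finH s hs)
  simp only [energyRate]
  linarith

namespace IsNSSol

variable {ν T : ℝ} {f θ θ₀ : Coef} {u u₀ : ℝ → Coef}

lemma memH_one (h : IsNSSol ν f T θ u) (hθ : MemH 1 θ) {t : ℝ} (ht : t ∈ Icc 0 T) :
    MemH 1 (u t) := by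
  refine ⟨h.real t ht, ?_⟩
  rcases ht.1.eq_or_lt with rfl | ht0
  · exact h.init ▸ hθ.2
  · exact (h.memL2H2.1 t ⟨ht0, ht.2⟩).2.mono one_le_two

lemma isTrajectory (h : IsNSSol ν f T θ u) (hθ : MemH 1 θ) : IsTrajectory 1 T u where
  finH _ ht := (h.memH_one hθ ht).2
  tendsto_sub t ht := by
    refine Metric.tendsto_nhdsWithin_nhds.mpr fun ε hε => ?_
    obtain ⟨δ, hδ, hclose⟩ := h.contH1 t ht ε hε
    refine ⟨δ, hδ, fun s hs hst => ?_⟩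
    rw [dist_zero_right, Real.norm_of_nonneg (hN_nonneg _ _)]
    exact hclose s hs hst

lemma isHeatTrajectory (h : IsNSSol ν f T θ u) (hf : FinH 0 f) (hθ : MemH 1 θ) :
    IsHeatTrajectory ν T (fun t => f - Bc (u t) (u t)) u where
  trajectory := h.isTrajectory hθ
  forcing := (IsTrajectory.const (hf.mono (by norm_num))).sub
    ((h.isTrajectory hθ).Bc (h.isTrajectory hθ))
  hasDerivAt k t ht := by
    convert! h.deriv k t (Ioo_subset_Ioc_self ht) using 1
    rw [Pi.sub_apply, sub_right_comm]

lemma hN_sq_add_integral_le (h : IsNSSol ν f T θ u) (hν : 0 < ν) (hf : FinH 0 f)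
    (hθ : MemH 1 θ) {t : ℝ} (ht : t ∈ Icc 0 T) :
    hN 0 (u t) ^ 2 + ν * ∫ s in 0..t, hN 1 (u s) ^ 2 ≤
      Real.exp t * (hN 0 θ ^ 2 + t * hN 0 f ^ 2) := by
  have hu := h.isHeatTrajectory hf hθ
  have hgron := add_integral_le_exp_integral_mul (g := fun _ => 1) (h := fun _ => hN 0 f ^ 2)
    (d := fun s => ν * hN 1 (u s) ^ 2) ((hu.trajectory.mono zero_le_one).continuousOn_hN.fun_pow 2)
    continuousOn_const continuousOn_const ((hu.trajectory.continuousOn_hN.fun_pow 2).const_mul _)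
    (fun _ => zero_le_one) (fun _ => by positivity) (fun _ => by positivity)
    (fun s hs => hu.hasDerivAt_hN_sq hν.le hs) (fun s hs => ?_) ht
  · simpa [h.init] using hgron
  · have hs := Ioo_subset_Icc_self hs
    have hus := h.memH_one hθ hs
    have hpower : hInner 0 f (u s) ≤ hN 0 f * hN 0 (u s) := by
      have hf' : FinH (-0) f := by rwa [neg_zero]
      simpa only [neg_zero] using le_of_abs_le (abs_hInner_le hf' (hus.2.mono zero_le_one))
    change _ ≤ 1 * hN 0 (u s) ^ 2 + hN 0 f ^ 2
    simp only [IsHeatTrajectory.energyRate]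
    rw [hInner_sub_left (α := 1) (hf.mono (by norm_num))
      (finH_neg_one_Bc_and_hN_le hus.2 hus.2).1 hus.2, hus.1.hInner_Bc_self hus.2 hus.2]
    nlinarith [sq_nonneg (hN 0 f - hN 0 (u s)), mul_nonneg hν.le (sq_nonneg (hN 1 (u s)))]

lemma isTrajectory_sub (h : IsNSSol ν f T θ u) (h₀ : IsNSSol ν f T θ₀ u₀) (hθ : MemH 1 θ)
    (hθ₀ : MemH 1 θ₀) : IsTrajectory 1 T (u - u₀) :=
  (h.isTrajectory hθ).sub (h₀.isTrajectory hθ₀)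

lemma isHeatTrajectory_sub (h : IsNSSol ν f T θ u) (h₀ : IsNSSol ν f T θ₀ u₀) (hf : FinH 0 f)
    (hθ : MemH 1 θ) (hθ₀ : MemH 1 θ₀) :
    IsHeatTrajectory ν T (fun t => 0 - Bc (u t) ((u - u₀) t) - Bc ((u - u₀) t) (u₀ t))
      (u - u₀) := by
  refine ((h.isHeatTrajectory hf hθ).sub (h₀.isHeatTrajectory hf hθ₀)).congr_forcing
    fun t ht => ?_
  have hu := (h.memH_one hθ ht).2.mono zero_le_one
  have hu₀ := (h₀.memH_one hθ₀ ht).2.mono zero_le_one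
  simp only [Pi.sub_apply]
  rw [Bc_sub_right hu hu hu₀, Bc_sub_left hu hu₀ hu₀]
  abel

lemma isHeatTrajectory_sub_self (h : IsNSSol ν f T θ u) (h₀ : IsNSSol ν f T θ₀ u₀)
    (hf : FinH 0 f) (hθ : MemH 1 θ) (hθ₀ : MemH 1 θ₀) :
    IsHeatTrajectory ν T (fun t => -Bc ((u - u₀) t) ((u - u₀) t) - Bc (u₀ t) ((u - u₀) t)
      - Bc ((u - u₀) t) (u₀ t)) (u - u₀) := by
  refine (h.isHeatTrajectory_sub h₀ hf hθ hθ₀).congr_forcing fun t ht => ?_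
  have hu := (h.memH_one hθ ht).2.mono zero_le_one
  have hu₀ := (h₀.memH_one hθ₀ ht).2.mono zero_le_one
  have hself : Bc (u t - u₀ t) (u t - u₀ t) = Bc (u t) (u t - u₀ t) - Bc (u₀ t) (u t - u₀ t) :=
    Bc_sub_left hu hu₀ (hu.sub hu₀)
  simp only [Pi.sub_apply]
  rw [hself]
  abel

end IsNSSol

/-- Squared `L²`-Lipschitz constant on `[0,T]` of the Navier–Stokes flow at an initial condition of
`L²`-norm at most `B`, where `F` is the `L²`-norm of the forcing. -/
def flowLipschitzSq (ν F T B : ℝ) : ℝ :=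
  Real.exp (512 / ν * (Real.exp T * (B ^ 2 + T * F ^ 2) / ν))

lemma flowLipschitzSq_pos (ν F T B : ℝ) : 0 < flowLipschitzSq ν F T B := Real.exp_pos _

lemma IsNSSol.exp_integral_hN_sq_le {ν T B : ℝ} {f θ : Coef} {u : ℝ → Coef}
    (h : IsNSSol ν f T θ u) (hν : 0 < ν) (hf : FinH 0 f) (hθ : MemH 1 θ) (hB : hN 0 θ ≤ B) {t : ℝ}
    (ht : t ∈ Icc 0 T) :
    Real.exp (512 / ν * ∫ s in 0..t, hN 1 (u s) ^ 2) ≤ flowLipschitzSq ν (hN 0 f) T B := by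
  have henergy := h.hN_sq_add_integral_le hν hf hθ ht
  have hgrowth : Real.exp t * (hN 0 θ ^ 2 + t * hN 0 f ^ 2)
      ≤ Real.exp T * (B ^ 2 + T * hN 0 f ^ 2) := by
    have := hN_nonneg 0 θ
    have := ht.1
    gcongr <;> exact ht.2
  refine Real.exp_le_exp.mpr (mul_le_mul_of_nonneg_left ?_ (by positivity))
  rw [le_div_iff₀' hν]
  linarith [sq_nonneg (hN 0 (u t))]

section Flow

variable {T ν B : ℝ} {f θ₀ : Coef} {u : Coef → ℝ → Coef}

lemma hN_flow_sub_sq_add_integral_le (hν : 0 < ν) (hf : FinH 0 f)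
    (hu : ∀ θ, MemH 1 θ → IsNSSol ν f T θ (u θ)) (hθ₀ : MemH 1 θ₀) (hB : hN 0 θ₀ ≤ B) {θ : Coef}
    (hθ : MemH 1 θ) {t : ℝ} (ht : t ∈ Icc 0 T) :
    hN 0 (u θ t - u θ₀ t) ^ 2 + ν * ∫ s in 0..t, hN 1 (u θ s - u θ₀ s) ^ 2 ≤
      flowLipschitzSq ν (hN 0 f) T B * hN 0 (θ - θ₀) ^ 2 := by
  have hbound := ((hu θ hθ).isHeatTrajectory_sub (hu θ₀ hθ₀) hf hθ hθ₀).hN_sq_add_integral_le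
    (N := fun _ => 0) hν (.const (finH_zero _)) (fun s hs => (hu θ hθ).memH_one hθ hs)
    ((hu θ₀ hθ₀).isTrajectory hθ₀) ht
  simp only [Pi.sub_apply, (hu θ hθ).init, (hu θ₀ hθ₀).init, hN_zero, ne_eq, OfNat.ofNat_ne_zero,
    not_false_eq_true, zero_pow, intervalIntegral.integral_zero, mul_zero, add_zero] at hbound
  exact hbound.trans (mul_le_mul_of_nonneg_right
    ((hu θ₀ hθ₀).exp_integral_hN_sq_le hν hf hθ₀ hB ht) (sq_nonneg _))

lemma hN_flow_sub_le (hν : 0 < ν) (hf : FinH 0 f) (hu : ∀ θ, MemH 1 θ → IsNSSol ν f T θ (u θ))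
    (hθ₀ : MemH 1 θ₀) (hB : hN 0 θ₀ ≤ B) {θ : Coef} (hθ : MemH 1 θ) {t : ℝ} (ht : t ∈ Icc 0 T) :
    hN 0 (u θ t - u θ₀ t) ≤ √(flowLipschitzSq ν (hN 0 f) T B) * hN 0 (θ - θ₀) := by
  have henergy := hN_flow_sub_sq_add_integral_le hν hf hu hθ₀ hB hθ ht
  have hdissipation : 0 ≤ ∫ s in 0..t, hN 1 (u θ s - u θ₀ s) ^ 2 :=
    intervalIntegral.integral_nonneg ht.1 fun _ _ => sq_nonneg _
  rw [← Real.sqrt_sq (hN_nonneg 0 (θ - θ₀)), ← Real.sqrt_mul (flowLipschitzSq_pos ..).le]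
  exact Real.le_sqrt_of_sq_le (by linarith [mul_nonneg hν.le hdissipation])

end Flow

section LinearCombination

variable {ι : Type*} {T ν : ℝ}

lemma hN_sum_smul_le {α : ℝ} (s : Finset ι) (r : ι → ℝ) {c : ι → Coef}
    (hc : ∀ i, FinH α (c i)) : hN α (∑ i ∈ s, r i • c i) ≤ ∑ i ∈ s, |r i| * hN α (c i) := by
  simp only [← hN_smul]
  exact Finset.le_sum_of_subadditive_on_pred (hN α) (FinH α) (hN_zero α).le
    (fun _ _ => hN_add_le) (fun _ _ => FinH.add) _ fun i _ => (hc i).smul (r i)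

lemma hN_neg_one_sum_smul_Bc_self_sq_le {L : ℝ} (hL : 0 ≤ L) (s : Finset ι) (r p : ι → ℝ)
    {d : ι → Coef} (hd : ∀ i, MemH 1 (d i)) (hle : ∀ i, hN 0 (d i) ≤ √L * p i) :
    hN (-1) (∑ i ∈ s, r i • -Bc (d i) (d i)) ^ 2 ≤
      256 * L * (∑ i ∈ s, |r i| * p i ^ 2) * ∑ i ∈ s, |r i| * hN 1 (d i) ^ 2 := by
  have hlinear : hN (-1) (∑ i ∈ s, r i • -Bc (d i) (d i))
      ≤ 16 * √L * ∑ i ∈ s, |r i| * (p i * hN 1 (d i)) := by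
    have hfin (i : ι) : FinH (-1) (-Bc (d i) (d i)) :=
      (finH_neg_one_Bc_and_hN_le (hd i).2 (hd i).2).1.neg
    refine (hN_sum_smul_le s r hfin).trans ?_
    rw [Finset.mul_sum]
    refine Finset.sum_le_sum fun i _ => ?_
    calc |r i| * hN (-1) (-Bc (d i) (d i))
        ≤ |r i| * (16 * hN 0 (d i) * hN 1 (d i)) := by
          rw [hN_neg]
          exact mul_le_mul_of_nonneg_left ((hd i).1.hN_neg_one_Bc_self_le (hd i).2) (abs_nonneg _)
      _ ≤ |r i| * (16 * (√L * p i) * hN 1 (d i)) := by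
          have := hN_nonneg 1 (d i)
          gcongr
          exact hle i
      _ = 16 * √L * (|r i| * (p i * hN 1 (d i))) := by ring
  have hcauchy : (∑ i ∈ s, |r i| * (p i * hN 1 (d i))) ^ 2
      ≤ (∑ i ∈ s, |r i| * p i ^ 2) * ∑ i ∈ s, |r i| * hN 1 (d i) ^ 2 :=
    Finset.sum_sq_le_sum_mul_sum_of_sq_le_mul s (fun i _ => by positivity)
      (fun i _ => by positivity) fun i _ => by
        rw [mul_pow, sq |r i|]
        exact le_of_eq (by ring)
  calc _ ≤ (16 * √L * ∑ i ∈ s, |r i| * (p i * hN 1 (d i))) ^ 2 :=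
        pow_le_pow_left₀ (hN_nonneg _ _) hlinear 2
    _ = 256 * L * (∑ i ∈ s, |r i| * (p i * hN 1 (d i))) ^ 2 := by
        rw [mul_pow, mul_pow, Real.sq_sqrt hL]
        norm_num
    _ ≤ 256 * L * ((∑ i ∈ s, |r i| * p i ^ 2) * ∑ i ∈ s, |r i| * hN 1 (d i) ^ 2) := by
        gcongr
    _ = _ := by ring

lemma IsHeatTrajectory.sum_smul_of_forcing_sub_Bc {a b : ℝ → Coef} {N d : ι → ℝ → Coef}
    (ha : ∀ t ∈ Icc 0 T, FinH 0 (a t)) (hb : ∀ t ∈ Icc 0 T, FinH 0 (b t)) (s : Finset ι) (r : ι → ℝ)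
    (h : ∀ i, IsHeatTrajectory ν T (fun t => N i t - Bc (a t) (d i t) - Bc (d i t) (b t)) (d i)) :
    IsHeatTrajectory ν T (fun t => ∑ i ∈ s, r i • N i t - Bc (a t) ((∑ i ∈ s, r i • d i) t)
      - Bc ((∑ i ∈ s, r i • d i) t) (b t)) (∑ i ∈ s, r i • d i) := by
  refine (sum_smul s r h).congr_forcing fun t ht => ?_
  have hd (i : ι) : FinH 0 (d i t) := ((h i).trajectory.finH t ht).mono zero_le_one
  simp only [Finset.sum_apply, Pi.smul_apply]
  rw [Bc_sum_smul_left s r hd (hb t ht), Bc_sum_smul_right s r (ha t ht) hd]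
  simp only [smul_sub, Finset.sum_sub_distrib]

end LinearCombination

/-- Constant of the quadratic remainder estimate for linear combinations of solutions. -/
def flowQuadraticConst (ν F T B : ℝ) : ℝ := √(512 * flowLipschitzSq ν F T B ^ 3) / ν

section Quadratic

variable {ι : Type*} (S : Finset ι) (r : ι → ℝ) {T ν B : ℝ} {f θ₀ : Coef} {u : Coef → ℝ → Coef}
  {x : ι → Coef}

lemma isTrajectory_sum_smul_Bc_flow_sub (hu : ∀ θ, MemH 1 θ → IsNSSol ν f T θ (u θ))
    (hθ₀ : MemH 1 θ₀) (hx : ∀ i, MemH 1 (x i)) :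
    IsTrajectory (-1) T fun t =>
      ∑ i ∈ S, r i • -Bc (u (x i) t - u θ₀ t) (u (x i) t - u θ₀ t) := by
  have hd (i : ι) := (hu (x i) (hx i)).isTrajectory_sub (hu θ₀ hθ₀) (hx i) hθ₀
  refine (IsTrajectory.sum_smul S (fun i => -r i) fun i => (hd i).Bc (hd i)).congr fun t _ => ?_
  rw [Finset.sum_apply]
  refine Finset.sum_congr rfl fun i _ => ?_
  rw [Pi.smul_apply, neg_smul, smul_neg]
  rfl

lemma integral_hN_neg_one_sum_smul_Bc_flow_sub_sq_le (hν : 0 < ν) (hf : FinH 0 f)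
    (hu : ∀ θ, MemH 1 θ → IsNSSol ν f T θ (u θ)) (hθ₀ : MemH 1 θ₀) (hB : hN 0 θ₀ ≤ B)
    (hx : ∀ i, MemH 1 (x i)) {t : ℝ} (ht : t ∈ Icc 0 T) :
    ∫ s in 0..t, hN (-1) (∑ i ∈ S, r i • -Bc (u (x i) s - u θ₀ s) (u (x i) s - u θ₀ s)) ^ 2 ≤
      256 * flowLipschitzSq ν (hN 0 f) T B ^ 2 / ν *
        (∑ i ∈ S, |r i| * hN 0 (x i - θ₀) ^ 2) ^ 2 := by
  set L := flowLipschitzSq ν (hN 0 f) T B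
  set P := ∑ i ∈ S, |r i| * hN 0 (x i - θ₀) ^ 2
  have hL : 0 ≤ L := (flowLipschitzSq_pos ..).le
  have : 0 ≤ P := Finset.sum_nonneg fun i _ => by positivity
  have hsub : uIcc 0 t ⊆ Icc 0 T := uIcc_of_le ht.1 ▸ Icc_subset_Icc_right ht.2
  have hforcing := (isTrajectory_sum_smul_Bc_flow_sub S r hu hθ₀ hx).continuousOn_hN
  have hd (i : ι) := (hu (x i) (hx i)).isTrajectory_sub (hu θ₀ hθ₀) (hx i) hθ₀
  have hcont (i : ι) : ContinuousOn (fun s => |r i| * hN 1 (u (x i) s - u θ₀ s) ^ 2) (uIcc 0 t) :=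
    (((hd i).continuousOn_hN.fun_pow 2).const_mul _).mono hsub
  have hdissipation (i : ι) :
      ∫ s in 0..t, hN 1 (u (x i) s - u θ₀ s) ^ 2 ≤ L * hN 0 (x i - θ₀) ^ 2 / ν := by
    rw [le_div_iff₀' hν]
    exact (le_add_of_nonneg_left (sq_nonneg _)).trans
      (hN_flow_sub_sq_add_integral_le hν hf hu hθ₀ hB (hx i) ht)
  calc _ ≤ ∫ s in 0..t, 256 * L * P * ∑ i ∈ S, |r i| * hN 1 (u (x i) s - u θ₀ s) ^ 2 := by
        refine intervalIntegral.integral_mono_on ht.1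
          ((hforcing.fun_pow 2).mono hsub).intervalIntegrable
          ((continuousOn_finsetSum S fun i _ => hcont i).const_mul _).intervalIntegrable
          fun s hs => ?_
        have hs : s ∈ Icc 0 T := ⟨hs.1, hs.2.trans ht.2⟩
        exact hN_neg_one_sum_smul_Bc_self_sq_le hL S r (fun i => hN 0 (x i - θ₀))
          (fun i => (sobolev 1).sub_mem ((hu (x i) (hx i)).memH_one (hx i) hs)
            ((hu θ₀ hθ₀).memH_one hθ₀ hs)) fun i => hN_flow_sub_le hν hf hu hθ₀ hB (hx i) hs
    _ = 256 * L * P * ∑ i ∈ S, |r i| * ∫ s in 0..t, hN 1 (u (x i) s - u θ₀ s) ^ 2 := by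
        rw [intervalIntegral.integral_const_mul, intervalIntegral.integral_finsetSum
          fun i _ => (hcont i).intervalIntegrable]
        simp only [intervalIntegral.integral_const_mul]
    _ ≤ 256 * L * P * ∑ i ∈ S, |r i| * (L * hN 0 (x i - θ₀) ^ 2 / ν) := by
        gcongr
        exact hdissipation _
    _ = 256 * L ^ 2 / ν * P ^ 2 := by
        have hfactor (i : ι) : |r i| * (L * hN 0 (x i - θ₀) ^ 2 / ν)
          = L / ν * (|r i| * hN 0 (x i - θ₀) ^ 2) := by ring
        simp only [hfactor, ← Finset.mul_sum]
        ring

lemma hN_sum_smul_flow_sub_le (hν : 0 < ν) (hf : FinH 0 f)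
    (hu : ∀ θ, MemH 1 θ → IsNSSol ν f T θ (u θ)) (hθ₀ : MemH 1 θ₀) (hB : hN 0 θ₀ ≤ B)
    (hx : ∀ i, MemH 1 (x i)) (hsum : ∑ i ∈ S, r i • (x i - θ₀) = 0) {t : ℝ}
    (ht : t ∈ Icc 0 T) :
    hN 0 (∑ i ∈ S, r i • (u (x i) t - u θ₀ t)) ≤
      flowQuadraticConst ν (hN 0 f) T B * ∑ i ∈ S, |r i| * hN 0 (x i - θ₀) ^ 2 := by
  set L := flowLipschitzSq ν (hN 0 f) T B
  have hL : 0 ≤ L := (flowLipschitzSq_pos ..).le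
  have hu₀ := (hu θ₀ hθ₀).isTrajectory hθ₀
  have hu₀_fin (s : ℝ) (hs : s ∈ Icc 0 T) : FinH 0 (u θ₀ s) := (hu₀.finH s hs).mono zero_le_one
  have hv := IsHeatTrajectory.sum_smul_of_forcing_sub_Bc hu₀_fin hu₀_fin S r fun i =>
      (hu (x i) (hx i)).isHeatTrajectory_sub_self (hu θ₀ hθ₀) hf (hx i) hθ₀
  have henergy := hv.hN_sq_add_integral_le hν
    (isTrajectory_sum_smul_Bc_flow_sub S r hu hθ₀ hx)
    (fun s hs => (hu θ₀ hθ₀).memH_one hθ₀ hs) hu₀ ht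
  have hinit : (∑ i ∈ S, r i • (u (x i) - u θ₀)) 0 = 0 := by
    simp only [Finset.sum_apply, Pi.smul_apply, Pi.sub_apply, (hu _ (hx _)).init,
      (hu θ₀ hθ₀).init, hsum]
  rw [hinit, hN_zero] at henergy
  have hdissipation : 0 ≤ ν * ∫ s in 0..t, hN 1 ((∑ i ∈ S, r i • (u (x i) - u θ₀)) s) ^ 2 :=
    mul_nonneg hν.le (intervalIntegral.integral_nonneg ht.1 fun _ _ => sq_nonneg _)
  have hexp := (hu θ₀ hθ₀).exp_integral_hN_sq_le hν hf hθ₀ hB ht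
  have hforcing := integral_hN_neg_one_sum_smul_Bc_flow_sub_sq_le S r hν hf hu hθ₀ hB hx ht
  refine le_of_sq_le_sq ?_ (by unfold flowQuadraticConst; positivity)
  calc hN 0 (∑ i ∈ S, r i • (u (x i) t - u θ₀ t)) ^ 2
      = hN 0 ((∑ i ∈ S, r i • (u (x i) - u θ₀)) t) ^ 2 := by
        simp only [Finset.sum_apply, Pi.smul_apply, Pi.sub_apply]
    _ ≤ L * (0 ^ 2 + 2 / ν * (256 * L ^ 2 / ν * (∑ i ∈ S, |r i| * hN 0 (x i - θ₀) ^ 2) ^ 2)) := by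
        refine (le_add_of_nonneg_right hdissipation).trans (henergy.trans ?_)
        refine mul_le_mul hexp (by gcongr; exact hforcing) (add_nonneg (sq_nonneg _) ?_) hL
        exact mul_nonneg (by positivity)
          (intervalIntegral.integral_nonneg ht.1 fun _ _ => sq_nonneg _)
    _ = _ := by
        rw [mul_pow, flowQuadraticConst, div_pow, Real.sq_sqrt (by positivity)]
        ring

end Quadratic

section Linearization

variable {X Y : Type*} [AddCommGroup X] [Module ℝ X] [NormedAddCommGroup Y] [NormedSpace ℝ Y]
  {K : ℝ} {p : X → ℝ} {F : X → Y}

/-- `F` turns linear relations between three vectors into relations that hold up to an error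
quadratic in the gauge `p`; three vectors suffice to express additivity and homogeneity. -/
def IsLinearUpToSq (K : ℝ) (p : X → ℝ) (F : X → Y) : Prop :=
  ∀ (r : Fin 3 → ℝ) (x : Fin 3 → X), ∑ i, r i • x i = 0 →
    ‖∑ i, r i • F (x i)‖ ≤ K * ∑ i, |r i| * p (x i) ^ 2

namespace IsLinearUpToSq

lemma diffQuot (hF : IsLinearUpToSq K p F) (hp : ∀ (r : ℝ) x, p (r • x) = |r| * p x) {h : ℝ}
    (hh : h ≠ 0) : IsLinearUpToSq (|h| * K) p fun x => h⁻¹ • F (h • x) := by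
  intro r x hrx
  have hrel : ∑ i, (r i * h⁻¹) • h • x i = 0 := by
    simpa only [smul_smul, inv_mul_cancel_right₀ hh] using hrx
  calc ‖∑ i, r i • h⁻¹ • F (h • x i)‖ = ‖∑ i, (r i * h⁻¹) • F (h • x i)‖ := by
        simp only [smul_smul]
    _ ≤ K * ∑ i, |r i * h⁻¹| * p (h • x i) ^ 2 := hF _ _ hrel
    _ = |h| * K * ∑ i, |r i| * p (x i) ^ 2 := by
        simp only [Finset.mul_sum, hp, abs_mul, abs_inv]
        refine Finset.sum_congr rfl fun i _ => ?_
        field_simp [abs_ne_zero.mpr hh]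

lemma norm_diffQuot_sub_diffQuot_le (hF : IsLinearUpToSq K p F)
    (hp : ∀ (r : ℝ) x, p (r • x) = |r| * p x) (x : X) {h k : ℝ} (hh : h ≠ 0) (hk : k ≠ 0) :
    ‖h⁻¹ • F (h • x) - k⁻¹ • F (k • x)‖ ≤ (|h| + |k|) * (K * p x ^ 2) := by
  have hrel := hF ![h⁻¹, -k⁻¹, 0] ![h • x, k • x, 0] (by simp [Fin.sum_univ_three, hh, hk])
  simp only [Fin.sum_univ_three, Matrix.cons_val, zero_smul, add_zero, neg_smul, abs_neg, abs_zero,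
    zero_mul, hp, abs_inv] at hrel
  rw [sub_eq_add_neg]
  refine hrel.trans_eq ?_
  field_simp [abs_ne_zero.mpr hh, abs_ne_zero.mpr hk]

lemma exists_tendsto_diffQuot [CompleteSpace Y] (hF : IsLinearUpToSq K p F)
    (hp : ∀ (r : ℝ) x, p (r • x) = |r| * p x) (x : X) :
    ∃ y, Tendsto (fun h : ℝ => h⁻¹ • F (h • x)) (𝓝[≠] 0) (𝓝 y) := by
  refine cauchy_map_iff_exists_tendsto.mp (cauchy_map_iff.mpr ⟨inferInstance, ?_⟩)
  rw [Metric.uniformity_eq_comap_nhds_zero, tendsto_comap_iff]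
  have hbound : Tendsto (fun q : ℝ × ℝ => (|q.1| + |q.2|) * (K * p x ^ 2))
      (𝓝[≠] 0 ×ˢ 𝓝[≠] 0) (𝓝 0) := by
    have hcont : Continuous fun q : ℝ × ℝ => (|q.1| + |q.2|) * (K * p x ^ 2) := by fun_prop
    have hlim := hcont.tendsto (0, 0)
    rw [nhds_prod_eq, abs_zero, add_zero, zero_mul] at hlim
    exact hlim.mono_left (Filter.prod_mono nhdsWithin_le_nhds nhdsWithin_le_nhds)
  refine squeeze_zero' (.of_forall fun _ => dist_nonneg) ?_ hbound
  filter_upwards [prod_mem_prod self_mem_nhdsWithin self_mem_nhdsWithin] with q hq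
  rw [Function.comp_apply, dist_eq_norm]
  exact hF.norm_diffQuot_sub_diffQuot_le hp x hq.1 hq.2

lemma exists_linearMap_norm_sub_le [CompleteSpace Y] (hF : IsLinearUpToSq K p F)
    (hp : ∀ (r : ℝ) x, p (r • x) = |r| * p x) :
    ∃ L : X →ₗ[ℝ] Y, ∀ x, ‖F x - L x‖ ≤ K * p x ^ 2 := by
  choose V hV using hF.exists_tendsto_diffQuot hp
  have hrel (r : Fin 3 → ℝ) (x : Fin 3 → X) (hrx : ∑ i, r i • x i = 0) :
      ∑ i, r i • V (x i) = 0 := by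
    have hlim := tendsto_finsetSum Finset.univ fun i _ => (hV (x i)).const_smul (r i)
    refine tendsto_nhds_unique hlim (squeeze_zero_norm' ?_
      (a := fun h => |h| * K * ∑ i, |r i| * p (x i) ^ 2) ?_)
    · filter_upwards [self_mem_nhdsWithin] with h hh using hF.diffQuot hp hh r x hrx
    · have hcont : Continuous fun h : ℝ => |h| * K * ∑ i, |r i| * p (x i) ^ 2 := by fun_prop
      simpa using hcont.continuousAt.tendsto.mono_left (nhdsWithin_le_nhds (a := (0 : ℝ)))
  refine ⟨{ toFun := V, map_add' := fun x y => ?_, map_smul' := fun r x => ?_ }, fun x => ?_⟩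
  · have hadd := hrel ![1, -1, -1] ![x + y, x, y] (by simp [Fin.sum_univ_three])
    simp only [Fin.sum_univ_three, Matrix.cons_val, one_smul, neg_smul] at hadd
    rw [← sub_eq_zero, ← hadd]
    abel
  · have hsmul := hrel ![1, -r, 0] ![r • x, x, 0] (by simp [Fin.sum_univ_three])
    simp only [Fin.sum_univ_three, Matrix.cons_val, one_smul, neg_smul, zero_smul, add_zero,
      ← sub_eq_add_neg, sub_eq_zero] at hsmul
    exact hsmul
  · have hcont : Continuous fun h : ℝ => (|1| + |h|) * (K * p x ^ 2) := by fun_prop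
    have hbound := (hcont.tendsto 0).mono_left (nhdsWithin_le_nhds (s := {0}ᶜ))
    have hlim := ((hV x).const_sub ((1 : ℝ)⁻¹ • F ((1 : ℝ) • x))).norm
    have hle := le_of_tendsto_of_tendsto hlim hbound <| by
      filter_upwards [self_mem_nhdsWithin] with h hh using
        hF.norm_diffQuot_sub_diffQuot_le hp x one_ne_zero hh
    simpa using hle

end IsLinearUpToSq

end Linearization

lemma memℓp_coef_iff {c : Coef} : Memℓp c 2 ↔ FinH 0 c := by
  simp [memℓp_gen_iff, FinH]

lemma hN_coe_lp (y : lp (fun _ : Freq => ℂ) 2) : hN 0 y = ‖y‖ := by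
  rw [lp.norm_eq_tsum_rpow (by norm_num)]
  simp [hN, hSq, Real.sqrt_eq_rpow]

lemma exists_linearMap_hN_sub_le {X : Type*} [AddCommGroup X] [Module ℝ X] {K : ℝ} {p : X → ℝ}
    {F : X → Coef} (hp : ∀ (r : ℝ) x, p (r • x) = |r| * p x) (hF : ∀ x, FinH 0 (F x))
    (hK : ∀ (r : Fin 3 → ℝ) (x : Fin 3 → X), ∑ i, r i • x i = 0 →
      hN 0 (∑ i, r i • F (x i)) ≤ K * ∑ i, |r i| * p (x i) ^ 2) :
    ∃ L : X →ₗ[ℝ] Coef, ∀ x, FinH 0 (L x) ∧ hN 0 (F x - L x) ≤ K * p x ^ 2 := by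
  let G (x : X) : lp (fun _ : Freq => ℂ) 2 := ⟨F x, memℓp_coef_iff.mpr (hF x)⟩
  have hG : IsLinearUpToSq K p G := fun r x hrx => by
    rw [← hN_coe_lp, lp.coeFn_sum]
    exact hK r x hrx
  obtain ⟨L, hL⟩ := hG.exists_linearMap_norm_sub_le hp
  refine ⟨⟨⟨fun x => L x, fun x y => ?_⟩, fun r x => ?_⟩, fun x => ⟨?_, ?_⟩⟩
  · rw [map_add, lp.coeFn_add]
  · exact (congrArg _ (map_smul L r x)).trans (lp.coeFn_smul r (L x))
  · exact memℓp_coef_iff.mp (L x).2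
  · refine le_of_eq_of_le ?_ (hL x)
    rw [← hN_coe_lp, lp.coeFn_sub]
    rfl

lemma exists_eqOn_Icc_forall_hasDerivAt_Ioc {E : Type*} [NormedAddCommGroup E] [NormedSpace ℝ E]
    [CompleteSpace E] {g g' : ℝ → E} {a b : ℝ} (hab : a ≤ b) (hg : ContinuousOn g (Icc a b))
    (hg' : ContinuousOn g' (Icc a b)) (hderiv : ∀ t ∈ Ioo a b, HasDerivAt g (g' t) t) :
    ∃ G, EqOn G g (Icc a b) ∧ ∀ t ∈ Ioc a b, HasDerivAt G (g' t) t := by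
  have hext : Continuous (IccExtend hab ((Icc a b).domRestrict g')) :=
    (continuousOn_iff_continuous_domRestrict.mp hg').Icc_extend'
  have hext_eq : EqOn (IccExtend hab ((Icc a b).domRestrict g')) g' (Icc a b) := fun t ht =>
    IccExtend_of_mem hab _ ht
  refine ⟨fun t => g a + ∫ s in a..t, IccExtend hab ((Icc a b).domRestrict g') s, fun t ht => ?_,
    fun t ht => ?_⟩
  · have hsub : Icc a t ⊆ Icc a b := Icc_subset_Icc_right ht.2
    have hint : ∫ s in a..t, g' s = g t - g a :=
      intervalIntegral.integral_eq_sub_of_hasDerivAt_of_le ht.1 (hg.mono hsub)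
        (fun s hs => hderiv s ⟨hs.1, hs.2.trans_le ht.2⟩)
        ((hg'.mono hsub).intervalIntegrable_of_Icc ht.1)
    have hcongr : ∫ s in a..t, IccExtend hab ((Icc a b).domRestrict g') s = ∫ s in a..t, g' s :=
      intervalIntegral.integral_congr fun s hs => hext_eq (hsub (uIcc_of_le ht.1 ▸ hs))
    exact (congrArg _ (hcongr.trans hint)).trans (add_sub_cancel _ _)
  · rw [← hext_eq (Ioc_subset_Icc_self ht)]
    exact (hasDerivAt_integral_of_continuousOn_Icc (b := b + 1) hext.continuousOn
      ⟨ht.1, ht.2.trans_lt (lt_add_one b)⟩).const_add _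

section UniformLimit

variable {ι : Type*} {l : Filter ι} {T : ℝ} {a V : ι → ℝ → Coef} {b U : ℝ → Coef}

/-- `V n → U` along `l`, uniformly on `[0,T]` for the `L²` norm; the rate `δ` avoids suprema over
`[0,T]`. -/
def TendstoUniformlyL2 (T : ℝ) (V : ι → ℝ → Coef) (l : Filter ι) (U : ℝ → Coef) : Prop :=
  ∃ δ : ι → ℝ, Tendsto δ l (𝓝 0) ∧
    ∀ᶠ n in l, ∀ t ∈ Icc 0 T, FinH 0 (V n t) ∧ hN 0 (V n t - U t) ≤ δ n

/-- `U` maps `[0,T]` into a ball of `L²`. -/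
def IsBoundedL2 (T : ℝ) (U : ℝ → Coef) : Prop :=
  ∃ M, ∀ t ∈ Icc 0 T, FinH 0 (U t) ∧ hN 0 (U t) ≤ M

lemma IsTrajectory.isBoundedL2 (hU : IsTrajectory 0 T U) : IsBoundedL2 T U := by
  obtain ⟨M, hM⟩ := isCompact_Icc.bddAbove_image hU.continuousOn_hN
  exact ⟨M, fun t ht => ⟨hU.finH t ht, hM (mem_image_of_mem _ ht)⟩⟩

namespace TendstoUniformlyL2

lemma const (hb : IsBoundedL2 T b) : TendstoUniformlyL2 T (fun _ => b) l b := by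
  obtain ⟨_, hb⟩ := hb
  refine ⟨fun _ => 0, tendsto_const_nhds, .of_forall fun _ t ht => ⟨(hb t ht).1, ?_⟩⟩
  rw [sub_self, hN_zero]

lemma mono (hV : TendstoUniformlyL2 T V l U) {l' : Filter ι} (hl : l' ≤ l) :
    TendstoUniformlyL2 T V l' U := by
  obtain ⟨δ, hδ, hle⟩ := hV
  exact ⟨δ, hδ.mono_left hl, hle.filter_mono hl⟩

lemma hN_le [l.NeBot] (hV : TendstoUniformlyL2 T V l U) {M t : ℝ} (ht : t ∈ Icc 0 T)
    (hU : FinH 0 (U t)) (hM : ∀ᶠ n in l, hN 0 (V n t) ≤ M) : hN 0 (U t) ≤ M := by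
  obtain ⟨δ, hδ, hle⟩ := hV
  refine ge_of_tendsto (by simpa using hδ.const_add M) ?_
  filter_upwards [hle, hM] with n hn hnM
  obtain ⟨hfin, hdiff⟩ := hn t ht
  linarith [(abs_le.mp (abs_hN_sub_hN_le hfin hU)).1]

lemma apply (hV : TendstoUniformlyL2 T V l U) (hU : IsBoundedL2 T U) (k : Freq) :
    TendstoUniformlyOn (fun n t => V n t k) (fun t => U t k) l (Icc 0 T) := by
  obtain ⟨δ, hδ, hle⟩ := hV
  obtain ⟨_, hU⟩ := hU
  refine Metric.tendstoUniformlyOn_iff.mpr fun ε hε => ?_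
  filter_upwards [hle, hδ.eventually_lt_const hε] with n hn hnε t ht
  rw [dist_comm, dist_eq_norm]
  exact (norm_le_hN_zero ((hn t ht).1.sub (hU t ht).1) k).trans_lt ((hn t ht).2.trans_lt hnε)

lemma Bc (ha : TendstoUniformlyL2 T a l b) (hb : IsBoundedL2 T b) (hV : TendstoUniformlyL2 T V l U)
    (hU : IsBoundedL2 T U) (k : Freq) :
    TendstoUniformlyOn (fun n t => Bc (a n t) (V n t) k) (fun t => Bc (b t) (U t) k) l
      (Icc 0 T) := by
  obtain ⟨δ, hδ, hle⟩ := ha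
  obtain ⟨δ', hδ', hle'⟩ := hV
  obtain ⟨M, hM⟩ := hb
  obtain ⟨M', hM'⟩ := hU
  have hlim : Tendsto (fun n => 2 * Real.pi * ‖toComplex k.1‖ * (δ n * (δ' n + M') + M * δ' n)) l
      (𝓝 0) := by
    simpa using ((hδ.mul (hδ'.add_const M')).add (hδ'.const_mul M)).const_mul
      (2 * Real.pi * ‖toComplex k.1‖)
  refine Metric.tendstoUniformlyOn_iff.mpr fun ε hε => ?_
  filter_upwards [hle, hle', hlim.eventually_lt_const hε] with n hn hn' hnε t ht
  obtain ⟨hfin, hdiff⟩ := hn t ht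
  obtain ⟨hfin', hdiff'⟩ := hn' t ht
  have hnorm : hN 0 (V n t) ≤ δ' n + M' := by
    rw [← sub_add_cancel (V n t) (U t)]
    exact (hN_add_le (hfin'.sub (hM' t ht).1) (hM' t ht).1).trans (add_le_add hdiff' (hM' t ht).2)
  have hb_nonneg := hN_nonneg 0 (b t)
  rw [dist_comm, dist_eq_norm]
  refine ((norm_Bc_sub_Bc_le hfin (hM t ht).1 hfin' (hM' t ht).1 k).trans ?_).trans_lt hnε
  gcongr
  · exact hN_nonneg _ _
  · exact (hN_nonneg _ _).trans hdiff
  · exact hN_nonneg _ _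
  · exact hb_nonneg.trans (hM t ht).2
  · exact (hM t ht).2

lemma linearizedRHS (hVU : TendstoUniformlyL2 T V l U) (ν : ℝ) (ha : TendstoUniformlyL2 T a l b)
    (hb : IsBoundedL2 T b) (hU : IsBoundedL2 T U) (k : Freq) : TendstoUniformlyOn
      (fun n t => (0 - NS2D.Bc (a n t) (V n t) - NS2D.Bc (V n t) (b t)) k
        - ((ν * lam k : ℝ) : ℂ) * V n t k)
      (fun t => (0 - NS2D.Bc (b t) (U t) - NS2D.Bc (U t) (b t)) k
        - ((ν * lam k : ℝ) : ℂ) * U t k) l (Icc 0 T) := by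
  have hzero : TendstoUniformlyOn (fun (_ : ι) (_ : ℝ) => (0 : ℂ)) (fun _ => 0) l (Icc 0 T) :=
    fun _ hs => .of_forall fun _ _ _ => refl_mem_uniformity hs
  exact ((hzero.sub (ha.Bc hb hVU hU k)).sub (hVU.Bc hU (.const hb) hb k)).sub
    ((uniformContinuous_const_smul ((ν * lam k : ℝ) : ℂ)).comp_tendstoUniformlyOn (hVU.apply hU k))

end TendstoUniformlyL2

lemma IsReal.of_tendsto [l.NeBot] {c : ι → Coef} {d : Coef} (hc : ∀ᶠ n in l, IsReal (c n))
    (hlim : ∀ k, Tendsto (fun n => c n k) l (𝓝 (d k))) : IsReal d := fun k =>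
  tendsto_nhds_unique_of_eventuallyEq (hlim (fneg k))
    ((Complex.continuous_conj.tendsto _).comp (hlim k)).neg (hc.mono fun _ hn => hn k)

lemma exists_eqOn_mode_hasDerivAt_of_tendstoUniformlyL2 [l.NeBot] {ν : ℝ} (hT : 0 ≤ T)
    (hV : ∀ᶠ n in l, IsHeatTrajectory ν T (fun t => 0 - Bc (a n t) (V n t) - Bc (V n t) (b t))
      (V n)) (ha : TendstoUniformlyL2 T a l b) (hb : IsBoundedL2 T b)
    (hVU : TendstoUniformlyL2 T V l U) (hU : IsBoundedL2 T U) (k : Freq) :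
    ∃ w : ℝ → ℂ, EqOn w (fun t => U t k) (Icc 0 T) ∧ ∀ t ∈ Ioc 0 T, HasDerivAt w
      ((0 - Bc (b t) (U t) - Bc (U t) (b t)) k - ((ν * lam k : ℝ) : ℂ) * U t k) t := by
  have hmode := hVU.apply hU k
  have hrhs := hVU.linearizedRHS ν ha hb hU k
  have hcont : ∀ᶠ n in l, ContinuousOn (fun t => (0 - Bc (a n t) (V n t) - Bc (V n t) (b t)) k
      - ((ν * lam k : ℝ) : ℂ) * V n t k) (Icc 0 T) := hV.mono fun _ h =>
    (h.forcing.continuousOn_apply k).fun_sub ((h.trajectory.continuousOn_apply k).const_mul _)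
  refine exists_eqOn_Icc_forall_hasDerivAt_Ioc hT
    (hmode.continuousOn (hV.mono fun _ h => h.trajectory.continuousOn_apply k).frequently)
    (hrhs.continuousOn hcont.frequently) fun t ht => ?_
  exact hasDerivAt_of_tendstoUniformlyOn isOpen_Ioo (hrhs.mono Ioo_subset_Icc_self)
    (hV.mono fun _ h => h.hasDerivAt k)
    (fun s hs => hmode.tendsto_at (Ioo_subset_Icc_self hs)) ht

lemma exists_eqOn_isLinSol_of_tendstoUniformlyL2 [l.NeBot] {ν : ℝ} (hT : 0 ≤ T)
    (hV : ∀ᶠ n in l, IsHeatTrajectory ν T (fun t => 0 - Bc (a n t) (V n t) - Bc (V n t) (b t))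
      (V n)) (hV_real : ∀ᶠ n in l, ∀ t ∈ Icc 0 T, IsReal (V n t))
    (ha : TendstoUniformlyL2 T a l b) (hb : IsBoundedL2 T b)
    (hVU : TendstoUniformlyL2 T V l U) (hU : IsBoundedL2 T U) :
    ∃ W, EqOn W U (Icc 0 T) ∧ IsLinSol ν b T (U 0) W := by
  choose W hWU hW using exists_eqOn_mode_hasDerivAt_of_tendstoUniformlyL2 hT hV ha hb hVU hU
  have hWU' {t : ℝ} (ht : t ∈ Icc 0 T) : (fun k => W k t) = U t := funext fun k => hWU k ht
  refine ⟨fun t k => W k t, fun t ht => hWU' ht, hWU' ⟨le_rfl, hT⟩, fun t ht => ?_,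
    fun k t ht => (hW k t ht).congr_deriv ?_⟩
  · rw [hWU' ht]
    exact .of_tendsto (hV_real.mono fun _ h => h t ht) fun k => (hVU.apply hU k).tendsto_at ht
  · have ht := Ioc_subset_Icc_self ht
    rw [hWU' ht, hWU k ht]
    simp only [Pi.sub_apply]
    ring

end UniformLimit

/-- `Λ` is the derivative along `θ₀` of the flow `u` on `[0,T]`, with `L²` operator norm at most `C`
and quadratic remainder with constant `K`. -/
structure IsFlowLinearization (ν T C K : ℝ) (u : Coef → ℝ → Coef) (θ₀ : Coef)
    (Λ : ℝ → Coef → Coef) : Prop where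
  isLinMap : ∀ t ∈ Icc 0 T, IsLinMap (Λ t)
  isLinSol : ∀ ξ, MemH 1 ξ → IsLinSol ν (u θ₀) T ξ fun t => Λ t ξ
  finH : ∀ t ∈ Icc 0 T, ∀ ξ, MemH 1 ξ → FinH 0 (Λ t ξ)
  hN_le : ∀ t ∈ Icc 0 T, ∀ ξ, MemH 1 ξ → hN 0 (Λ t ξ) ≤ C * hN 0 ξ
  hN_sub_le : ∀ t ∈ Icc 0 T, ∀ θ, MemH 1 θ →
    hN 0 (u θ t - u θ₀ t - Λ t (θ - θ₀)) ≤ K * hN 0 (θ - θ₀) ^ 2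

/-- Difference quotient of the flow `u` at the initial condition `θ₀` in the direction `ξ`. -/
def flowDiffQuot (u : Coef → ℝ → Coef) (θ₀ ξ : Coef) (h : ℝ) : ℝ → Coef :=
  h⁻¹ • (u (θ₀ + h • ξ) - u θ₀)

section FlowLinearization

variable {T ν B : ℝ} {f θ₀ ξ : Coef} {u : Coef → ℝ → Coef}

lemma MemH.add_smul (hθ₀ : MemH 1 θ₀) (hξ : MemH 1 ξ) (h : ℝ) : MemH 1 (θ₀ + h • ξ) :=
  (sobolev 1).add_mem hθ₀ ((sobolev 1).smul_mem h hξ)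

lemma exists_linearMap_hN_flow_sub_le (hν : 0 < ν) (hf : FinH 0 f)
    (hu : ∀ θ, MemH 1 θ → IsNSSol ν f T θ (u θ)) (hθ₀ : MemH 1 θ₀) (hB : hN 0 θ₀ ≤ B) {t : ℝ}
    (ht : t ∈ Icc 0 T) :
    ∃ L : Coef →ₗ[ℝ] Coef, ∀ ξ, MemH 1 ξ → FinH 0 (L ξ) ∧
      hN 0 (u (θ₀ + ξ) t - u θ₀ t - L ξ) ≤ flowQuadraticConst ν (hN 0 f) T B * hN 0 ξ ^ 2 := by
  have hmem (ξ : sobolev 1) : MemH 1 (θ₀ + ξ) := (sobolev 1).add_mem hθ₀ ξ.2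
  have hfin (ξ : sobolev 1) : FinH 0 (u (θ₀ + ξ) t - u θ₀ t) :=
    (((hu _ (hmem ξ)).memH_one (hmem ξ) ht).2.sub
      ((hu θ₀ hθ₀).memH_one hθ₀ ht).2).mono zero_le_one
  have hK (r : Fin 3 → ℝ) (ξ : Fin 3 → sobolev 1) (hrξ : ∑ i, r i • ξ i = 0) :
      hN 0 (∑ i, r i • (u (θ₀ + ξ i) t - u θ₀ t)) ≤
        flowQuadraticConst ν (hN 0 f) T B * ∑ i, |r i| * hN 0 (ξ i) ^ 2 := by
    have hrel : ∑ i, r i • (θ₀ + ξ i - θ₀) = 0 := by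
      simpa only [add_sub_cancel_left, Submodule.coe_sum, Submodule.coe_smul,
        Submodule.coe_zero] using congrArg ((↑) : sobolev 1 → Coef) hrξ
    simpa only [add_sub_cancel_left] using
      hN_sum_smul_flow_sub_le Finset.univ r hν hf hu hθ₀ hB (fun i => hmem (ξ i)) hrel ht
  have hlin : ∃ L : sobolev 1 →ₗ[ℝ] Coef, ∀ ξ : sobolev 1, FinH 0 (L ξ) ∧
      hN 0 (u (θ₀ + ξ) t - u θ₀ t - L ξ) ≤ flowQuadraticConst ν (hN 0 f) T B * hN 0 ξ ^ 2 :=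
    exists_linearMap_hN_sub_le (fun r ξ => hN_smul 0 r ξ) hfin hK
  obtain ⟨L, hL⟩ := hlin
  obtain ⟨L', hL'⟩ := L.exists_extend
  refine ⟨L', fun ξ hξ => ?_⟩
  have hext : L' ξ = L ⟨ξ, hξ⟩ := LinearMap.congr_fun hL' ⟨ξ, hξ⟩
  rw [hext]
  exact hL ⟨ξ, hξ⟩

lemma isHeatTrajectory_flowDiffQuot (hf : FinH 0 f) (hu : ∀ θ, MemH 1 θ → IsNSSol ν f T θ (u θ))
    (hθ₀ : MemH 1 θ₀) (hξ : MemH 1 ξ) (h : ℝ) :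
    IsHeatTrajectory ν T (fun t => 0 - Bc (u (θ₀ + h • ξ) t) (flowDiffQuot u θ₀ ξ h t)
      - Bc (flowDiffQuot u θ₀ ξ h t) (u θ₀ t)) (flowDiffQuot u θ₀ ξ h) := by
  have hθ := hθ₀.add_smul hξ h
  have hdiff := (hu _ hθ).isHeatTrajectory_sub (hu θ₀ hθ₀) hf hθ hθ₀
  simpa only [flowDiffQuot, Finset.sum_singleton, smul_zero] using
    IsHeatTrajectory.sum_smul_of_forcing_sub_Bc (N := fun _ _ => 0)
      (fun t ht => ((hu _ hθ).memH_one hθ ht).2.mono zero_le_one)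
      (fun t ht => ((hu θ₀ hθ₀).memH_one hθ₀ ht).2.mono zero_le_one) {()} (fun _ => h⁻¹)
      fun _ => hdiff

lemma memH_flowDiffQuot (hu : ∀ θ, MemH 1 θ → IsNSSol ν f T θ (u θ)) (hθ₀ : MemH 1 θ₀)
    (hξ : MemH 1 ξ) (h : ℝ) {t : ℝ} (ht : t ∈ Icc 0 T) : MemH 1 (flowDiffQuot u θ₀ ξ h t) := by
  have hθ := hθ₀.add_smul hξ h
  exact (sobolev 1).smul_mem _
    ((sobolev 1).sub_mem ((hu _ hθ).memH_one hθ ht) ((hu θ₀ hθ₀).memH_one hθ₀ ht))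

lemma hN_flowDiffQuot_le (hν : 0 < ν) (hf : FinH 0 f)
    (hu : ∀ θ, MemH 1 θ → IsNSSol ν f T θ (u θ)) (hθ₀ : MemH 1 θ₀) (hB : hN 0 θ₀ ≤ B)
    (hξ : MemH 1 ξ) {h : ℝ} (hh : h ≠ 0) {t : ℝ} (ht : t ∈ Icc 0 T) :
    hN 0 (flowDiffQuot u θ₀ ξ h t) ≤ √(flowLipschitzSq ν (hN 0 f) T B) * hN 0 ξ := by
  have hlip := hN_flow_sub_le hν hf hu hθ₀ hB (hθ₀.add_smul hξ h) ht
  rw [add_sub_cancel_left, hN_smul, mul_left_comm, ← inv_mul_le_iff₀ (abs_pos.mpr hh)] at hlip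
  rwa [flowDiffQuot, Pi.smul_apply, Pi.sub_apply, hN_smul, abs_inv]

lemma tendstoUniformlyL2_flow_add_smul (hν : 0 < ν) (hf : FinH 0 f)
    (hu : ∀ θ, MemH 1 θ → IsNSSol ν f T θ (u θ)) (hθ₀ : MemH 1 θ₀) (hξ : MemH 1 ξ) :
    TendstoUniformlyL2 T (fun h : ℝ => u (θ₀ + h • ξ)) (𝓝 0) (u θ₀) := by
  have hcont : Continuous fun h : ℝ =>
      √(flowLipschitzSq ν (hN 0 f) T (hN 0 θ₀)) * (|h| * hN 0 ξ) := by fun_prop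
  refine ⟨_, by simpa using hcont.tendsto 0, .of_forall fun h t ht => ⟨?_, ?_⟩⟩
  · exact ((hu _ (hθ₀.add_smul hξ h)).memH_one (hθ₀.add_smul hξ h) ht).2.mono zero_le_one
  · simpa only [add_sub_cancel_left, hN_smul] using
      hN_flow_sub_le hν hf hu hθ₀ le_rfl (hθ₀.add_smul hξ h) ht

lemma tendstoUniformlyL2_flowDiffQuot {K : ℝ} {L : ℝ → Coef →ₗ[ℝ] Coef}
    (hu : ∀ θ, MemH 1 θ → IsNSSol ν f T θ (u θ)) (hθ₀ : MemH 1 θ₀) (hξ : MemH 1 ξ)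
    (hL : ∀ t ∈ Icc 0 T, ∀ ξ, MemH 1 ξ →
      hN 0 (u (θ₀ + ξ) t - u θ₀ t - L t ξ) ≤ K * hN 0 ξ ^ 2) :
    TendstoUniformlyL2 T (flowDiffQuot u θ₀ ξ) (𝓝[≠] 0) fun t => L t ξ := by
  have hcont : Continuous fun h : ℝ => |h| * (K * hN 0 ξ ^ 2) := by fun_prop
  refine ⟨_, by simpa using (hcont.tendsto 0).mono_left nhdsWithin_le_nhds, ?_⟩
  filter_upwards [self_mem_nhdsWithin] with h hh t ht
  have hh' : |h| ≠ 0 := abs_ne_zero.mpr hh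
  refine ⟨(memH_flowDiffQuot hu hθ₀ hξ h ht).2.mono zero_le_one, ?_⟩
  calc hN 0 (flowDiffQuot u θ₀ ξ h t - L t ξ)
      = |h|⁻¹ * hN 0 (u (θ₀ + h • ξ) t - u θ₀ t - L t (h • ξ)) := by
        rw [← abs_inv, ← hN_smul, map_smul, smul_sub h⁻¹ (_ - _), inv_smul_smul₀ hh]
        rfl
    _ ≤ |h|⁻¹ * (K * (|h| * hN 0 ξ) ^ 2) := by
        rw [← hN_smul]
        gcongr
        exact hL t ht _ ((sobolev 1).smul_mem h hξ)
    _ = |h| * (K * hN 0 ξ ^ 2) := by field_simp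

lemma exists_eqOn_isLinSol_of_tendsto_flowDiffQuot {U : ℝ → Coef} (hT : 0 ≤ T) (hν : 0 < ν)
    (hf : FinH 0 f) (hu : ∀ θ, MemH 1 θ → IsNSSol ν f T θ (u θ)) (hθ₀ : MemH 1 θ₀)
    (hξ : MemH 1 ξ) (hU : TendstoUniformlyL2 T (flowDiffQuot u θ₀ ξ) (𝓝[≠] 0) U)
    (hU_bdd : IsBoundedL2 T U) :
    ∃ W, EqOn W U (Icc 0 T) ∧ IsLinSol ν (u θ₀) T ξ W := by
  have hquot_init (h : ℝ) (hh : h ≠ 0) : flowDiffQuot u θ₀ ξ h 0 = ξ := by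
    rw [flowDiffQuot, Pi.smul_apply, Pi.sub_apply, (hu _ (hθ₀.add_smul hξ h)).init,
      (hu θ₀ hθ₀).init, add_sub_cancel_left, inv_smul_smul₀ hh]
  have hinit : U 0 = ξ := funext fun k =>
    tendsto_nhds_unique ((hU.apply hU_bdd k).tendsto_at ⟨le_rfl, hT⟩) <| by
      refine tendsto_const_nhds.congr' ?_
      filter_upwards [self_mem_nhdsWithin] with h hh
      rw [hquot_init h hh]
  rw [← hinit]
  exact exists_eqOn_isLinSol_of_tendstoUniformlyL2 hT
    (.of_forall (isHeatTrajectory_flowDiffQuot hf hu hθ₀ hξ))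
    (.of_forall fun h t ht => (memH_flowDiffQuot hu hθ₀ hξ h ht).1)
    ((tendstoUniformlyL2_flow_add_smul hν hf hu hθ₀ hξ).mono nhdsWithin_le_nhds)
    (((hu θ₀ hθ₀).isTrajectory hθ₀).mono zero_le_one).isBoundedL2 hU hU_bdd

lemma exists_isFlowLinearization (hT : 0 ≤ T) (hν : 0 < ν) (hf : FinH 0 f)
    (hu : ∀ θ, MemH 1 θ → IsNSSol ν f T θ (u θ)) (hθ₀ : MemH 1 θ₀) :
    ∃ Λ, IsFlowLinearization ν T (√(flowLipschitzSq ν (hN 0 f) T (hN 0 θ₀)))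
      (flowQuadraticConst ν (hN 0 f) T (hN 0 θ₀)) u θ₀ Λ := by
  classical
  choose! L hL using fun t (ht : t ∈ Icc 0 T) =>
    exists_linearMap_hN_flow_sub_le hν hf hu hθ₀ le_rfl ht
  have hlim (ξ : Coef) (hξ : MemH 1 ξ) :=
    tendstoUniformlyL2_flowDiffQuot hu hθ₀ hξ fun t ht ξ hξ => (hL t ht ξ hξ).2
  have hbound (t : ℝ) (ht : t ∈ Icc 0 T) (ξ : Coef) (hξ : MemH 1 ξ) :=
    (hlim ξ hξ).hN_le ht (hL t ht ξ hξ).1 <| by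
      filter_upwards [self_mem_nhdsWithin] with h hh using
        hN_flowDiffQuot_le hν hf hu hθ₀ le_rfl hξ hh ht
  have hsol (ξ : Coef) (hξ : MemH 1 ξ) := exists_eqOn_isLinSol_of_tendsto_flowDiffQuot hT hν hf hu
    hθ₀ hξ (hlim ξ hξ) ⟨_, fun t ht => ⟨(hL t ht ξ hξ).1, hbound t ht ξ hξ⟩⟩
  choose! W hWL hW using hsol
  have hΛ (ξ : Coef) (hξ : MemH 1 ξ) : (fun t => if t ∈ Icc 0 T then L t ξ else W ξ t) = W ξ := by
    ext1 t
    split_ifs with ht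
    exacts [(hWL ξ hξ ht).symm, rfl]
  refine ⟨fun t ξ => if t ∈ Icc 0 T then L t ξ else W ξ t, fun t ht => ?_, fun ξ hξ => ?_,
    fun t ht ξ hξ => ?_, fun t ht ξ hξ => ?_, fun t ht θ hθ => ?_⟩
  · simp only [if_pos ht]
    exact ⟨map_add (L t), map_smul (L t)⟩
  · exact (hΛ ξ hξ).symm ▸ hW ξ hξ
  · simpa only [if_pos ht] using (hL t ht ξ hξ).1
  · simpa only [if_pos ht] using hbound t ht ξ hξ
  · simpa only [if_pos ht, add_sub_cancel] using
      (hL t ht _ ((sobolev 1).sub_mem hθ hθ₀)).2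

end FlowLinearization

section Rellich

variable {α β : ℝ}

lemma hN_sq_le_sum_add {c : Coef} (hc : FinH β c) (hαβ : α ≤ β) {S : Finset Freq} {R : ℝ}
    (hR : 0 < R) (hS : ∀ k ∉ S, R ≤ lam k) :
    hN α c ^ 2 ≤ ∑ k ∈ S, lam k ^ α * ‖c k‖ ^ 2 + R ^ (α - β) * hN β c ^ 2 := by
  classical
  have hlow : HasSum (fun k => if k ∈ S then lam k ^ α * ‖c k‖ ^ 2 else 0)
      (∑ k ∈ S, lam k ^ α * ‖c k‖ ^ 2) := by
    rw [← Finset.sum_congr rfl fun k hk => if_pos hk]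
    exact hasSum_sum_of_ne_finset_zero fun k hk => if_neg hk
  refine hasSum_le (fun k => ?_) (hc.mono hαβ).hasSum (hlow.add (hc.hasSum.mul_left (R ^ (α - β))))
  have hterm := hSq_term_nonneg β c k
  split_ifs with hk
  · exact le_add_of_nonneg_right (by positivity)
  · calc lam k ^ α * ‖c k‖ ^ 2 = lam k ^ (α - β) * (lam k ^ β * ‖c k‖ ^ 2) := by
          rw [← mul_assoc, ← Real.rpow_add (lam_pos k), sub_add_cancel]
      _ ≤ 0 + R ^ (α - β) * (lam k ^ β * ‖c k‖ ^ 2) := by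
          rw [zero_add]
          exact mul_le_mul_of_nonneg_right
            (Real.rpow_le_rpow_of_nonpos hR (hS k hk) (sub_nonpos.mpr hαβ)) hterm

/-- The frequencies in `S` of `A^{α/2} c`, a finite-dimensional shadow of the `Ḣ^α` norm. -/
def modes (α : ℝ) (S : Finset Freq) : Coef →ₗ[ℝ] EuclideanSpace ℂ S :=
  (WithLp.linearEquiv 2 ℝ (S → ℂ)).symm.toLinearMap ∘ₗ
    LinearMap.funLeft ℝ ℂ (Subtype.val : S → Freq) ∘ₗ stokesPow α

lemma norm_modes_sq (α : ℝ) (S : Finset Freq) (c : Coef) :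
    ‖modes α S c‖ ^ 2 = ∑ k ∈ S, lam k ^ α * ‖c k‖ ^ 2 := by
  rw [EuclideanSpace.norm_sq_eq, ← Finset.sum_coe_sort S fun k => lam k ^ α * ‖c k‖ ^ 2]
  exact Finset.sum_congr rfl fun k _ => norm_stokesPow_sq α c k

lemma norm_modes_le {c : Coef} (hc : FinH α c) (S : Finset Freq) : ‖modes α S c‖ ≤ hN α c := by
  refine le_of_sq_le_sq ?_ (hN_nonneg α c)
  rw [norm_modes_sq]
  exact sum_le_hasSum S (fun k _ => hSq_term_nonneg α c k) hc.hasSum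

lemma exists_finset_forall_le_lam_and_rpow_mul_lt (hαβ : α < β) (M : ℝ) {ε : ℝ} (hε : 0 < ε) :
    ∃ R > 0, ∃ S : Finset Freq, (∀ k ∉ S, R ≤ lam k) ∧ R ^ (α - β) * M < ε := by
  have hlim : Tendsto (fun R : ℝ => R ^ (α - β) * M) atTop (𝓝 0) := by
    simpa using (tendsto_rpow_neg_atTop (sub_pos.mpr hαβ)).mul_const M
  obtain ⟨R, hlt, hR⟩ := ((hlim.eventually_lt_const hε).and (eventually_gt_atTop 0)).exists
  exact ⟨R, hR, (finite_setOf_lam_lt R).toFinset, by simp, hlt⟩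

lemma exists_finset_subset_forall_hN_sub_lt (hαβ : α < β) {E : Set Coef} {M : ℝ}
    (hE : ∀ c ∈ E, FinH β c ∧ hN β c ≤ M) {ε : ℝ} (hε : 0 < ε) :
    ∃ S : Finset Coef, ↑S ⊆ E ∧ ∀ c ∈ E, ∃ s ∈ S, hN α (c - s) < ε := by
  obtain ⟨R, hR, S, hS, htail⟩ := exists_finset_forall_le_lam_and_rpow_mul_lt hαβ ((M + M) ^ 2)
    (half_pos (pow_pos hε 2))
  have hbdd : Bornology.IsBounded (modes α S '' E) := isBounded_iff_forall_norm_le.mpr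
    ⟨M, forall_mem_image.mpr fun c hc => (norm_modes_le ((hE c hc).1.mono hαβ.le) S).trans
      ((hN_mono (hE c hc).1 hαβ.le).trans (hE c hc).2)⟩
  have htb : TotallyBounded (modes α S '' E) :=
    hbdd.isCompact_closure.totallyBounded.subset subset_closure
  obtain ⟨N, hNE, hNfin, hcover⟩ := exists_subset_image_finite_and.mp
    (Metric.finite_approx_of_totallyBounded htb √(ε ^ 2 / 2) (by positivity))
  refine ⟨hNfin.toFinset, by simpa using hNE, fun c hc => ?_⟩
  obtain ⟨s, hs, hcs⟩ : ∃ s ∈ N, dist (modes α S c) (modes α S s) < √(ε ^ 2 / 2) := by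
    simpa using hcover (mem_image_of_mem _ hc)
  refine ⟨s, by simpa using hs, lt_of_pow_lt_pow_left₀ 2 hε.le ?_⟩
  have hcE := hE c hc
  have hsE := hE s (hNE hs)
  have hdiff : hN β (c - s) ≤ M + M := (hN_sub_le hcE.1 hsE.1).trans (add_le_add hcE.2 hsE.2)
  have hlow : ∑ k ∈ S, lam k ^ α * ‖(c - s) k‖ ^ 2 < ε ^ 2 / 2 := by
    rw [← norm_modes_sq, map_sub, ← dist_eq_norm]
    exact (Real.lt_sqrt dist_nonneg).mp hcs
  calc hN α (c - s) ^ 2 ≤ _ := hN_sq_le_sum_add (hcE.1.sub hsE.1) hαβ.le hR hS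
    _ ≤ ∑ k ∈ S, lam k ^ α * ‖(c - s) k‖ ^ 2 + R ^ (α - β) * (M + M) ^ 2 := by
        have := hN_nonneg β (c - s)
        gcongr
    _ < ε ^ 2 / 2 + ε ^ 2 / 2 := add_lt_add hlow htail
    _ = ε ^ 2 := add_halves _

lemma isCompactOp_of_hN_le {Λ : Coef → Coef} {C γ : ℝ} (hαβ : α < β) (hΛ : IsLinMap Λ)
    (hmem : ∀ c, MemH β c → MemH γ (Λ c)) (hle : ∀ c, MemH β c → hN γ (Λ c) ≤ C * hN α c) :
    IsCompactOp β γ Λ := by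
  classical
  refine ⟨hΛ, hmem, fun ε hε => ?_⟩
  obtain ⟨S, hS, hnet⟩ := exists_finset_subset_forall_hN_sub_lt hαβ
    (E := {c | MemH β c ∧ hN β c ≤ 1}) (fun c hc => ⟨hc.1.2, hc.2⟩)
    (div_pos hε (add_pos_of_nonneg_of_pos (abs_nonneg C) one_pos))
  refine ⟨S.image Λ, fun c hc hc1 => ?_⟩
  obtain ⟨s, hs, hcs⟩ := hnet c ⟨hc, hc1⟩
  refine ⟨Λ s, Finset.mem_image_of_mem Λ hs, ?_⟩
  have hsub : Λ c - Λ s = Λ (c - s) := sub_eq_of_eq_add (by rw [← hΛ.1, sub_add_cancel])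
  calc hN γ (Λ c - Λ s) ≤ C * hN α (c - s) := by
        rw [hsub]
        exact hle _ ((sobolev β).sub_mem hc (hS hs).1)
    _ ≤ (|C| + 1) * hN α (c - s) :=
        mul_le_mul_of_nonneg_right ((le_abs_self C).trans (lt_add_one _).le) (hN_nonneg _ _)
    _ < ε := (lt_div_iff₀' (by positivity)).mp hcs

end Rellich

namespace IsFlowLinearization

variable {T ν C K t : ℝ} {θ₀ : Coef} {u : Coef → ℝ → Coef} {Λ : ℝ → Coef → Coef}

lemma isCompactOp (h : IsFlowLinearization ν T C K u θ₀ Λ) (ht : t ∈ Icc 0 T) :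
    IsCompactOp 1 0 (Λ t) :=
  isCompactOp_of_hN_le zero_lt_one (h.isLinMap t ht)
    (fun ξ hξ => ⟨(h.isLinSol ξ hξ).real t ht, h.finH t ht ξ hξ⟩) (h.hN_le t ht)

lemma exists_forall_hN_sub_le_mul (h : IsFlowLinearization ν T C K u θ₀ Λ) (ht : t ∈ Icc 0 T)
    {ε : ℝ} (hε : 0 < ε) : ∃ δ : ℝ, 0 < δ ∧ ∀ θ, MemH 1 θ → hN 0 (θ - θ₀) < δ →
      hN 0 (u θ t - u θ₀ t - Λ t (θ - θ₀)) ≤ ε * hN 0 (θ - θ₀) := by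
  refine ⟨ε / (|K| + 1), by positivity, fun θ hθ hlt => (h.hN_sub_le t ht θ hθ).trans ?_⟩
  have hnonneg := hN_nonneg 0 (θ - θ₀)
  rw [sq, ← mul_assoc]
  refine mul_le_mul_of_nonneg_right ?_ hnonneg
  calc K * hN 0 (θ - θ₀) ≤ (|K| + 1) * hN 0 (θ - θ₀) :=
        mul_le_mul_of_nonneg_right ((le_abs_self K).trans (lt_add_one _).le) hnonneg
    _ ≤ ε := ((lt_div_iff₀' (by positivity)).mp hlt).le

end IsFlowLinearization

section QuadraticConst

variable {ν : ℝ} (F T B : ℝ)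

lemma flowQuadraticConst_pos (hν : 0 < ν) : 0 < flowQuadraticConst ν F T B := by
  have := flowLipschitzSq_pos ν F T B
  unfold flowQuadraticConst
  positivity

variable {B} in
lemma flowQuadraticConst_mono (hν : 0 < ν) {A : ℝ} (hA : 0 ≤ A) (hAB : A ≤ B) :
    flowQuadraticConst ν F T A ≤ flowQuadraticConst ν F T B := by
  have := (flowLipschitzSq_pos ν F T A).le
  have hlip : flowLipschitzSq ν F T A ≤ flowLipschitzSq ν F T B := by
    unfold flowLipschitzSq
    gcongr
  unfold flowQuadraticConst
  gcongr

end QuadraticConst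

end

/-- Proposition `PropExistLin`. Linearisation of the
Navier–Stokes flow: given `ν>0`, `f ∈ Ḣ_⋄` and the family of strong solutions
`θ ↦ u_θ` on `[0,T]`, there is a family of compact linear operators
`Λ_{θ₀,t} : Ḣ¹_⋄ → Ḣ_⋄` (for `θ₀ ∈ Ḣ¹_⋄` and `t ∈ (0,T]`) such that
(i) `‖u_θ(t) − u_{θ₀}(t) − Λ_{θ₀,t}[θ−θ₀]‖_{L²} / ‖θ−θ₀‖_{L²} → 0` as
`‖θ−θ₀‖_{L²} → 0`; (ii) for `ξ ∈ Ḣ¹_⋄` the map `t ↦ Λ_{θ₀,t}[ξ]` solves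
`dU/dt − νΔU + B[u_{θ₀},U] + B[U,u_{θ₀}] = 0`, `U(0) = ξ`; and (iii) for any
`T>0`, `B>0` there is `c = c(ν,‖f‖_{L²},T,B) > 0` with
`sup_{0≤t≤T} ‖u_θ(t) − u_{θ₀}(t) − Λ_{θ₀,t}[θ−θ₀]‖_{L²} ≤ c ‖θ−θ₀‖²_{L²}`
for all `‖θ₀‖_{Ḣ¹} ≤ B` and all `θ ∈ Ḣ¹_⋄`. -/
theorem statement5 (T ν : ℝ) (hT : 0 < T) (hν : 0 < ν) (f : Coef) (hf : MemH 0 f)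
    (u : Coef → ℝ → Coef) (hu : ∀ θ, MemH 1 θ → IsNSSol ν f T θ (u θ)) :
    ∃ Λ : Coef → ℝ → Coef → Coef,
      (∀ θ₀, MemH 1 θ₀ → ∀ t ∈ Ioc (0:ℝ) T, IsCompactOp 1 0 (Λ θ₀ t)) ∧
      (∀ θ₀, MemH 1 θ₀ → ∀ t ∈ Ioc (0:ℝ) T, ∀ ε : ℝ, 0 < ε → ∃ δ : ℝ, 0 < δ ∧
        ∀ θ, MemH 1 θ → 0 < hN 0 (θ - θ₀) → hN 0 (θ - θ₀) < δ →
          hN 0 (u θ t - u θ₀ t - Λ θ₀ t (θ - θ₀)) ≤ ε * hN 0 (θ - θ₀)) ∧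
      (∀ θ₀, MemH 1 θ₀ → ∀ ξ, MemH 1 ξ →
        IsLinSol ν (u θ₀) T ξ (fun t => Λ θ₀ t ξ)) ∧
      (∀ B : ℝ, 0 < B → ∃ c : ℝ, 0 < c ∧
        ∀ θ₀ θ, MemH 1 θ₀ → hN 1 θ₀ ≤ B → MemH 1 θ →
          ∀ t ∈ Icc (0:ℝ) T,
            hN 0 (u θ t - u θ₀ t - Λ θ₀ t (θ - θ₀)) ≤ c * hN 0 (θ - θ₀) ^ 2) := by
  have hflow (θ₀ : Coef) (hθ₀ : MemH 1 θ₀) := exists_isFlowLinearization hT.le hν hf.2 hu hθ₀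
  choose! Λ hΛ using hflow
  refine ⟨Λ, fun θ₀ hθ₀ t ht => (hΛ θ₀ hθ₀).isCompactOp (Ioc_subset_Icc_self ht),
    fun θ₀ hθ₀ t ht ε hε => ?_, fun θ₀ hθ₀ => (hΛ θ₀ hθ₀).isLinSol,
    fun B _ => ⟨flowQuadraticConst ν (hN 0 f) T B, flowQuadraticConst_pos _ _ _ hν, ?_⟩⟩
  · obtain ⟨δ, hδ, hle⟩ :=
      (hΛ θ₀ hθ₀).exists_forall_hN_sub_le_mul (Ioc_subset_Icc_self ht) hε
    exact ⟨δ, hδ, fun θ hθ _ => hle θ hθ⟩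
  · intro θ₀ θ hθ₀ hB hθ t ht
    have hB₀ : hN 0 θ₀ ≤ B := (hN_mono hθ₀.2 zero_le_one).trans hB
    exact ((hΛ θ₀ hθ₀).hN_sub_le t ht θ hθ).trans (mul_le_mul_of_nonneg_right
      (flowQuadraticConst_mono _ _ hν (hN_nonneg 0 θ₀) hB₀) (sq_nonneg _))

end NS2D
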